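/- arXiv:2309.06155 — 2 statements merged into one kernel-verified Lean document; each statement's English description precedes it below -/
import Mathlib

section
/- If φ ∈ BUC(ℝ^n), then R_j(φ) ∈ VMO(ℝ^n) for each j = 1, …, n. -/
open MeasureTheory Real Set Filter

/-- Open axis-parallel cube with corner `c` and side length `l`. -/
def cube {n : ℕ} (c : EuclideanSpace ℝ (Fin n)) (l : ℝ) : Set (EuclideanSpace ℝ (Fin n)) :=
  {x | ∀ i, x i ∈ Set.Ioo (c i) (c i + l)}

/-- Mean of `f` over the cube with corner `c` and side length `l`. -/
noncomputable def cubeAvg {n : ℕ} (f : EuclideanSpace ℝ (Fin n) → ℝ)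
    (c : EuclideanSpace ℝ (Fin n)) (l : ℝ) : ℝ :=
  (∫ x in cube c l, f x) / l ^ n

/-- Mean oscillation of `f` over the cube with corner `c` and side length `l`. -/
noncomputable def cubeOsc {n : ℕ} (f : EuclideanSpace ℝ (Fin n) → ℝ)
    (c : EuclideanSpace ℝ (Fin n)) (l : ℝ) : ℝ :=
  (∫ x in cube c l, |f x - cubeAvg f c l|) / l ^ n

/-- `f ∈ BMO(ℝⁿ)`. -/
def IsBMO {n : ℕ} (f : EuclideanSpace ℝ (Fin n) → ℝ) : Prop :=
  LocallyIntegrable f ∧ ∃ C, ∀ c l, 0 < l → cubeOsc f c l ≤ C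

/-- `f ∈ VMO(ℝⁿ)`. -/
def IsVMO {n : ℕ} (f : EuclideanSpace ℝ (Fin n) → ℝ) : Prop :=
  IsBMO f ∧ ∀ ε > (0 : ℝ), ∃ δ > (0 : ℝ), ∀ c l, 0 < l → l ≤ δ → cubeOsc f c l ≤ ε

/-- The `BMO` seminorm `‖f‖_*`. -/
noncomputable def bmoNorm {n : ℕ} (f : EuclideanSpace ℝ (Fin n) → ℝ) : ℝ :=
  sInf {C : ℝ | 0 ≤ C ∧ ∀ c l, 0 < l → cubeOsc f c l ≤ C}

/-- Riesz kernel `K_j(x) = c_n x_j / |x|^{n+1}` with `c_n = Γ((n+1)/2)/π^((n+1)/2)`. -/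
noncomputable def rieszK (n : ℕ) (j : Fin n) (x : EuclideanSpace ℝ (Fin n)) : ℝ :=
  (Real.Gamma (((n : ℝ) + 1) / 2) / Real.pi ^ (((n : ℝ) + 1) / 2)) * x j / ‖x‖ ^ (n + 1)

/-- `ε`-truncation of the Riesz transform of `φ ∈ L²`:
`∫_{|x-y| ≥ ε} K_j(x-y) φ(y) dy`. -/
noncomputable def rieszTruncL2 {n : ℕ} (j : Fin n) (φ : EuclideanSpace ℝ (Fin n) → ℝ)
    (x : EuclideanSpace ℝ (Fin n)) (ε : ℝ) : ℝ :=
  ∫ y in {y : EuclideanSpace ℝ (Fin n) | ε ≤ dist x y}, rieszK n j (x - y) * φ y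

/-- `ε`-truncation of the Riesz transform extended to `L^∞`:
`∫_{|x-y| ≥ ε} (K_j(x-y) - K_j(-y) χ_{|y| ≥ 1}(y)) φ(y) dy`. -/
noncomputable def rieszTruncLinf {n : ℕ} (j : Fin n) (φ : EuclideanSpace ℝ (Fin n) → ℝ)
    (x : EuclideanSpace ℝ (Fin n)) (ε : ℝ) : ℝ :=
  ∫ y in {y : EuclideanSpace ℝ (Fin n) | ε ≤ dist x y},
    (rieszK n j (x - y) - (if 1 ≤ ‖y‖ then rieszK n j (-y) else 0)) * φ y

/-- `g` is the principal-value Riesz transform (extended to `L^∞`) of `φ`, a.e. -/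
def IsRieszTransformLinf {n : ℕ} (j : Fin n) (φ g : EuclideanSpace ℝ (Fin n) → ℝ) : Prop :=
  ∀ᵐ x : EuclideanSpace ℝ (Fin n),
    Tendsto (fun ε => rieszTruncLinf j φ x ε) (nhdsWithin 0 (Set.Ioi 0)) (nhds (g x))

open scoped FourierTransform SchwartzMap ENNReal ContDiff Topology

section Planch
variable {E : Type*} [NormedAddCommGroup E] [MeasurableSpace E] [BorelSpace E]
  [InnerProductSpace ℝ E] [FiniteDimensional ℝ E]

lemma rz_fourier_ae_eq (f : E → ℂ) (h1 : Integrable f) (h2 : MemLp f 2) :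
    (𝓕 (h2.toLp f) : Lp ℂ 2 (volume : Measure E)) =ᵐ[volume] 𝓕 f := by
  have hcont : Continuous (𝓕 f) :=
    VectorFourier.fourierIntegral_continuous Real.continuous_fourierChar
      (by exact continuous_inner) h1
  refine ae_eq_of_integral_contDiff_smul_eq ?_ hcont.locallyIntegrable ?_
  · exact (Lp.memLp (𝓕 (h2.toLp f) : Lp ℂ 2 (volume : Measure E))).locallyIntegrable (by norm_num)
  · intro g hg hgc
    have hgc' : HasCompactSupport (fun x => (g x : ℂ)) := hgc.comp_left (g := fun t : ℝ => (t:ℂ)) (by simp)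
    have hg' : ContDiff ℝ ∞ (fun x => (g x : ℂ)) := Complex.ofRealCLM.contDiff.comp hg
    let G : 𝓢(E, ℂ) := hgc'.toSchwartzMap hg'
    have hG : ∀ x, G x = (g x : ℂ) := fun x => rfl
    have e1 := MeasureTheory.Lp.fourier_toTemperedDistribution_eq (h2.toLp f)
    have e2 := congrArg (fun T => T G) e1
    simp only [TemperedDistribution.fourier_apply, Lp.toTemperedDistribution_apply] at e2
    have e3 : ∫ x, (𝓕 G) x • (h2.toLp f) x = ∫ x, (𝓕 G) x • f x := by
      apply integral_congr_ae
      filter_upwards [h2.coeFn_toLp] with x hx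
      rw [hx]
    have e4 : ∫ ξ, 𝓕 f ξ • G ξ = ∫ x, f x • 𝓕 (G : E → ℂ) x := by
      have := VectorFourier.integral_fourierIntegral_smul_eq_flip (L := innerₗ E) (μ := volume) (ν := volume)
        Real.continuous_fourierChar continuous_inner h1 G.integrable
      simpa using! this
    calc ∫ x, g x • (𝓕 (h2.toLp f) : Lp ℂ 2 (volume : Measure E)) x
        = ∫ x, G x • (𝓕 (h2.toLp f) : Lp ℂ 2 (volume : Measure E)) x := by
          simp [hG]
      _ = ∫ x, (𝓕 G) x • f x := by rw [← e2, e3]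
      _ = ∫ x, f x • 𝓕 (G : E → ℂ) x := by
          simp only [SchwartzMap.fourier_coe, smul_eq_mul, mul_comm]
      _ = ∫ ξ, 𝓕 f ξ • G ξ := e4.symm
      _ = _ := by simp [hG, mul_comm]

lemma rz_plancherel (f : E → ℂ) (h1 : Integrable f) (h2 : MemLp f 2) :
    eLpNorm (𝓕 f) 2 volume = eLpNorm f 2 volume := by
  rw [← eLpNorm_congr_ae (rz_fourier_ae_eq f h1 h2), ← eLpNorm_congr_ae h2.coeFn_toLp]
  have := MeasureTheory.Lp.norm_fourier_eq (h2.toLp f)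
  rw [Lp.norm_def, Lp.norm_def] at this
  exact (ENNReal.toReal_eq_toReal_iff' (Lp.eLpNorm_ne_top _) (Lp.eLpNorm_ne_top _)).1 this

lemma rz_memLp_two (f : E → ℂ) (h1 : Integrable f) (M : ℝ) (hM : ∀ x, ‖f x‖ ≤ M) : MemLp f 2 := by
  rw [memLp_two_iff_integrable_sq_norm h1.1]
  refine (h1.norm.const_mul M).mono' (h1.1.norm.pow 2) (ae_of_all _ fun x => ?_)
  rw [Real.norm_eq_abs, abs_of_nonneg (by positivity), sq]
  exact mul_le_mul_of_nonneg_right (hM x) (norm_nonneg _)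

lemma rz_conv_l2 (k f : E → ℂ) (hk : Integrable k) (hf : Integrable f) (M A : ℝ)
    (hM : ∀ x, ‖k x‖ ≤ M) (hf2 : MemLp f 2) (hA : ∀ ξ, ‖𝓕 k ξ‖ ≤ A) :
    eLpNorm (fun x => ∫ y, k (x - y) * f y) 2 volume ≤ ENNReal.ofReal A * eLpNorm f 2 volume := by
  set h : E → ℂ := MeasureTheory.convolution k f (ContinuousLinearMap.mul ℂ ℂ) volume with hh
  have e : (fun x => ∫ y, k (x - y) * f y) = h := by
    ext x
    rw [hh, MeasureTheory.convolution_eq_swap]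
    simp
  have i1 : Integrable h := hk.integrable_convolution _ hf
  have i2 : MemLp h 2 := by
    refine rz_memLp_two h i1 (M * ∫ y, ‖f y‖) fun x => ?_
    rw [← e, ← integral_const_mul]
    refine norm_integral_le_of_norm_le (hf.norm.const_mul M) (ae_of_all _ fun y => ?_)
    rw [norm_mul]
    exact mul_le_mul_of_nonneg_right (hM _) (norm_nonneg _)
  rw [e, ← rz_plancherel h i1 i2, ← rz_plancherel f hf hf2]
  refine eLpNorm_le_mul_eLpNorm_of_ae_le_mul (ae_of_all _ fun ξ => ?_) 2
  rw [hh, Real.fourier_mul_convolution_eq hk hf, norm_mul]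
  exact mul_le_mul_of_nonneg_right (hA ξ) (norm_nonneg _)

end Planch

lemma rz_sin_far (s c d : ℝ) (hs : 0 < s) (hc : 1 / s ≤ c) (hd : c ≤ d) :
    |∫ r in c..d, Real.sin (s * r) / r| ≤ 2 := by
  have hs' : 0 < 1 / s := by positivity
  have hc0 : 0 < c := by linarith
  have hd0 : 0 < d := by linarith
  have hpos : ∀ r ∈ Set.uIcc c d, 0 < r := by
    intro r hr; rw [Set.uIcc_of_le hd] at hr; exact lt_of_lt_of_le hc0 hr.1
  have hderiv : ∀ r ∈ Set.uIcc c d, HasDerivAt (fun r => - Real.cos (s * r) / (s * r))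
      (Real.sin (s * r) / r + Real.cos (s * r) / (s * r ^ 2)) r := by
    intro r hr
    have hr0 := hpos r hr
    have h1 : HasDerivAt (fun r : ℝ => s * r) s r := by
      simpa using (hasDerivAt_id r).const_mul s
    have h2 := (h1.cos.neg).div h1 (by positivity)
    convert! h2 using 1
    simp only [Pi.neg_apply]
    field_simp
    ring
  have c1 : ContinuousOn (fun r => Real.sin (s * r) / r) (Set.uIcc c d) :=
    ContinuousOn.div (by fun_prop) (by fun_prop) (fun r hr => (hpos r hr).ne')
  have c2 : ContinuousOn (fun r => Real.cos (s * r) / (s * r ^ 2)) (Set.uIcc c d) :=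
    ContinuousOn.div (by fun_prop) (by fun_prop) (fun r hr => by have := hpos r hr; positivity)
  have hi := intervalIntegral.integral_eq_sub_of_hasDerivAt hderiv
    (c1.intervalIntegrable.add c2.intervalIntegrable)
  rw [intervalIntegral.integral_add c1.intervalIntegrable c2.intervalIntegrable] at hi
  have hderiv2 : ∀ r ∈ Set.uIcc c d, HasDerivAt (fun r => - 1 / (s * r)) (1 / (s * r ^ 2)) r := by
    intro r hr
    have hr0 := hpos r hr
    have h1 : HasDerivAt (fun r : ℝ => s * r) s r := by
      simpa using (hasDerivAt_id r).const_mul s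
    have h2 := (hasDerivAt_const r (-1 : ℝ)).div h1 (by positivity)
    convert! h2 using 1
    field_simp
    ring
  have c3 : ContinuousOn (fun r => 1 / (s * r ^ 2)) (Set.uIcc c d) :=
    ContinuousOn.div (by fun_prop) (by fun_prop) (fun r hr => by have := hpos r hr; positivity)
  have hi2 := intervalIntegral.integral_eq_sub_of_hasDerivAt hderiv2 c3.intervalIntegrable
  have hb : |∫ r in c..d, Real.cos (s * r) / (s * r ^ 2)| ≤ ∫ r in c..d, 1 / (s * r ^ 2) := by
    have := intervalIntegral.norm_integral_le_of_norm_le (μ := volume) (a := c) (b := d)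
      (f := fun r => Real.cos (s * r) / (s * r ^ 2)) (g := fun r => 1 / (s * r ^ 2)) hd
      (by
        refine ae_of_all _ fun r hr => ?_
        have hr0 : 0 < r := lt_trans hc0 hr.1
        rw [Real.norm_eq_abs, abs_div, abs_of_pos (show 0 < s * r ^ 2 by positivity)]
        gcongr
        exact Real.abs_cos_le_one _) c3.intervalIntegrable
    simpa using this
  rw [hi2] at hb
  have b1 : ∀ r, 0 < r → |- Real.cos (s * r) / (s * r)| ≤ 1 / (s * r) := by
    intro r hr
    rw [abs_div, abs_neg, abs_of_pos (show 0 < s * r by positivity)]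
    gcongr
    exact Real.abs_cos_le_one _
  have b2 := b1 c hc0
  have b3 := b1 d hd0
  have b4 : 1 / (s * c) ≤ 1 := by
    rw [div_le_one (by positivity)]
    rw [div_le_iff₀ hs] at hc
    linarith
  rw [neg_div, neg_div] at hb
  have e : (∫ r in c..d, Real.sin (s * r) / r) =
    -Real.cos (s * d) / (s * d) - -Real.cos (s * c) / (s * c) - ∫ r in c..d, Real.cos (s * r) / (s * r ^ 2) := by
    linarith
  rw [e]
  rw [abs_le] at *
  constructor <;> linarith

lemma rz_sin_near (s c d : ℝ) (hs : 0 < s) (hc : 0 < c) (hd : c ≤ d) (hd' : d ≤ 1 / s) :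
    |∫ r in c..d, Real.sin (s * r) / r| ≤ 1 := by
  have := intervalIntegral.norm_integral_le_of_norm_le_const (a := c) (b := d)
      (f := fun r => Real.sin (s * r) / r) (C := s) (by
        intro r hr
        rw [Set.uIoc_of_le hd] at hr
        have hr0 : 0 < r := lt_trans hc hr.1
        rw [Real.norm_eq_abs, abs_div, abs_of_pos hr0, div_le_iff₀ hr0]
        refine Real.abs_sin_le_abs.trans ?_
        rw [abs_of_pos (by positivity)])
  rw [Real.norm_eq_abs, abs_of_nonneg (sub_nonneg.2 hd)] at this
  refine this.trans ?_
  rw [le_div_iff₀ hs] at hd'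
  nlinarith

lemma rz_sin (s a b : ℝ) (ha : 0 < a) (hb : a ≤ b) :
    |∫ r in a..b, Real.sin (s * r) / r| ≤ 3 := by
  have key : ∀ s : ℝ, 0 < s → |∫ r in a..b, Real.sin (s * r) / r| ≤ 3 := by
    intro s hs
    rcases le_total b (1 / s) with h | h
    · linarith [rz_sin_near s a b hs ha hb h]
    rcases le_total (1 / s) a with h' | h'
    · linarith [rz_sin_far s a b hs h' hb]
    have hc : ∀ c d, 0 < c → c ≤ d → IntervalIntegrable (fun r => Real.sin (s * r) / r) volume c d := by
      intro c d hc hd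
      refine ContinuousOn.intervalIntegrable (ContinuousOn.div (by fun_prop) (by fun_prop) ?_)
      intro r hr
      rw [Set.uIcc_of_le hd] at hr
      exact (lt_of_lt_of_le hc hr.1).ne'
    rw [← intervalIntegral.integral_add_adjacent_intervals (hc a (1/s) ha h') (hc (1/s) b (by positivity) h)]
    refine (abs_add_le _ _).trans ?_
    linarith [rz_sin_near s a (1/s) hs ha h' le_rfl, rz_sin_far s (1/s) b hs le_rfl h]
  rcases lt_trichotomy s 0 with h | h | h
  · have := key (-s) (by linarith)
    simpa [neg_mul, Real.sin_neg, neg_div] using this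
  · simp [h]
  · exact key s h

section Polar
variable {E : Type*} [NormedAddCommGroup E] [MeasurableSpace E] [BorelSpace E]
  [NormedSpace ℝ E] [FiniteDimensional ℝ E] [Nontrivial E]

lemma rz_polar (μ : Measure E) [μ.IsAddHaarMeasure] (H : E → ℝ) (hH : Integrable H μ) :
    ∫ x, H x ∂μ = ∫ θ : Metric.sphere (0 : E) 1,
      (∫ r in Ioi (0 : ℝ), r ^ (Module.finrank ℝ E - 1) * H (r • (θ : E))) ∂μ.toSphere := by
  let G : Metric.sphere (0 : E) 1 × Ioi (0 : ℝ) → ℝ := fun p => H ((p.2 : ℝ) • (p.1 : E))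
  have hG : ∀ x : ({(0)}ᶜ : Set E), G (homeomorphUnitSphereProd E x) = H x := by
    intro x
    have hx : ‖(x : E)‖ ≠ 0 := norm_ne_zero_iff.2 x.2
    simp [G, smul_smul, hx]
  have hint : Integrable G (μ.toSphere.prod (Measure.volumeIoiPow (Module.finrank ℝ E - 1))) := by
    rw [← μ.measurePreserving_homeomorphUnitSphereProd.integrable_comp_emb
      (Homeomorph.measurableEmbedding _)]
    have : IntegrableOn H ({(0)}ᶜ : Set E) μ := hH.integrableOn
    rw [integrableOn_iff_comap_subtypeVal (measurableSet_singleton _).compl] at this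
    convert! this using 1
    ext x
    exact hG x
  calc ∫ x, H x ∂μ = ∫ x : ({(0)}ᶜ : Set E), H x.1 ∂(μ.comap (↑)) := by
        rw [integral_subtype_comap (measurableSet_singleton _).compl fun x ↦ H x,
        restrict_compl_singleton]
    _ = ∫ p, G p ∂μ.toSphere.prod (.volumeIoiPow (Module.finrank ℝ E - 1)) := by
        rw [← μ.measurePreserving_homeomorphUnitSphereProd.integral_comp
          (Homeomorph.measurableEmbedding _)]
        simp only [hG]
    _ = _ := by
        rw [integral_prod _ hint]
        congr 1
        ext θ
        simp only [Measure.volumeIoiPow, ENNReal.ofReal]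
        rw [integral_withDensity_eq_integral_smul,
          integral_subtype_comap measurableSet_Ioi
            fun a ↦ Real.toNNReal (a ^ (Module.finrank ℝ E - 1)) • H (a • (θ : E)),
          setIntegral_congr_fun measurableSet_Ioi fun x hx ↦ ?_]
        · rw [NNReal.smul_def, Real.coe_toNNReal _ (pow_nonneg hx.out.le _), smul_eq_mul]
        · exact (measurable_subtype_coe.pow_const _).real_toNNReal

end Polar

section Kernel
variable {n : ℕ}

/-- the constant of the Riesz kernel -/
noncomputable def rzC (n : ℕ) : ℝ :=
  Real.Gamma (((n : ℝ) + 1) / 2) / Real.pi ^ (((n : ℝ) + 1) / 2)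

lemma rzC_nonneg (n : ℕ) : 0 ≤ rzC n := by
  unfold rzC
  have : 0 < Real.Gamma (((n : ℝ) + 1) / 2) := Real.Gamma_pos_of_pos (by positivity)
  positivity

lemma rzK_eq (j : Fin n) (x : EuclideanSpace ℝ (Fin n)) :
    rieszK n j x = rzC n * (x j / ‖x‖ ^ (n + 1)) := by
  rw [rieszK, rzC, mul_div_assoc]

lemma rzK_abs_le (j : Fin n) (x : EuclideanSpace ℝ (Fin n)) :
    |rieszK n j x| ≤ rzC n / ‖x‖ ^ n := by
  rw [rzK_eq, abs_mul, abs_of_nonneg (rzC_nonneg n), div_eq_mul_inv (rzC n)]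
  refine mul_le_mul_of_nonneg_left ?_ (rzC_nonneg n)
  have h : |x j| ≤ ‖x‖ := PiLp.norm_apply_le x j
  rcases eq_or_ne x 0 with rfl | hx
  · simp
  have hx' : 0 < ‖x‖ := norm_pos_iff.2 hx
  rw [abs_div, abs_of_pos (by positivity : 0 < ‖x‖ ^ (n + 1)), div_le_iff₀ (by positivity), pow_succ,
    ← mul_assoc, inv_mul_cancel₀ (by positivity), one_mul]
  exact h

lemma rzK_neg (j : Fin n) (x : EuclideanSpace ℝ (Fin n)) : rieszK n j (-x) = - rieszK n j x := by
  simp [rzK_eq, neg_div]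

lemma rzK_measurable (j : Fin n) : Measurable (rieszK n j) := by
  unfold rieszK
  fun_prop

/-- far truncation of the kernel -/
noncomputable def rzF (j : Fin n) (ε : ℝ) (x : EuclideanSpace ℝ (Fin n)) : ℝ :=
  if ε ≤ ‖x‖ then rieszK n j x else 0

/-- two-sided truncation of the kernel -/
noncomputable def rzT (j : Fin n) (ε R : ℝ) (x : EuclideanSpace ℝ (Fin n)) : ℝ :=
  if ε ≤ ‖x‖ ∧ ‖x‖ < R then rieszK n j x else 0

lemma rzF_measurable (j : Fin n) (ε : ℝ) : Measurable (rzF j ε) :=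
  Measurable.ite (measurableSet_le measurable_const measurable_norm) (rzK_measurable j) measurable_const

lemma rzT_measurable (j : Fin n) (ε R : ℝ) : Measurable (rzT j ε R) :=
  Measurable.ite ((measurableSet_le measurable_const measurable_norm).inter
    (measurableSet_lt measurable_norm measurable_const)) (rzK_measurable j) measurable_const

lemma rzF_abs_le (j : Fin n) (ε : ℝ) (hε : 0 < ε) (x) : |rzF j ε x| ≤ rzC n / ε ^ n := by
  have := rzC_nonneg n
  unfold rzF
  split_ifs with h
  · refine (rzK_abs_le j x).trans ?_
    gcongr
  · simp; positivity

lemma rzT_abs_le (j : Fin n) (ε R : ℝ) (hε : 0 < ε) (x) : |rzT j ε R x| ≤ rzC n / ε ^ n := by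
  have := rzC_nonneg n
  unfold rzT
  split_ifs with h
  · refine (rzK_abs_le j x).trans ?_
    gcongr
    exact h.1
  · simp; positivity

lemma rzT_neg (j : Fin n) (ε R : ℝ) (x) : rzT j ε R (-x) = - rzT j ε R x := by
  unfold rzT
  rw [norm_neg, rzK_neg]
  split_ifs <;> simp

lemma rzF_split (j : Fin n) (ε R : ℝ) (h : ε ≤ R) (x) : rzF j ε x = rzT j ε R x + rzF j R x := by
  unfold rzF rzT
  by_cases h1 : R ≤ ‖x‖
  · have h2 : ε ≤ ‖x‖ := h.trans h1
    have h3 : ¬ (‖x‖ < R) := not_lt.2 h1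
    simp [h1, h2, h3]
  · simp [h1, not_le.1 h1]

lemma rzT_eq_indicator (j : Fin n) (ε R : ℝ) :
    rzT j ε R = (Metric.ball 0 R).indicator (rzT j ε R) := by
  ext x
  by_cases h : x ∈ Metric.ball (0 : EuclideanSpace ℝ (Fin n)) R
  · rw [indicator_of_mem h]
  · rw [indicator_of_notMem h]
    rw [mem_ball_zero_iff] at h
    simp [rzT, h]

lemma rzT_integrable (j : Fin n) (ε R : ℝ) (hε : 0 < ε) : Integrable (rzT j ε R) := by
  rw [rzT_eq_indicator, integrable_indicator_iff Metric.isOpen_ball.measurableSet]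
  exact Measure.integrableOn_of_bounded (M := rzC n / ε ^ n) measure_ball_lt_top.ne
    (rzT_measurable j ε R).aestronglyMeasurable (ae_of_all _ fun x => rzT_abs_le j ε R hε x)

lemma rz_nontrivial (j : Fin n) : Nontrivial (EuclideanSpace ℝ (Fin n)) := by
  have : Nonempty (Fin n) := ⟨j⟩
  infer_instance

lemma rzT_radial (j : Fin n) (ε R : ℝ) (hε : 0 < ε) (hR : ε ≤ R) (θ ξ : EuclideanSpace ℝ (Fin n))
    (hθ : ‖θ‖ = 1) :
    ∫ r in Ioi (0 : ℝ), r ^ (Module.finrank ℝ (EuclideanSpace ℝ (Fin n)) - 1) *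
      (rzT j ε R (r • θ) * Real.sin (2 * π * inner ℝ (r • θ) ξ)) =
    rzC n * θ j * ∫ r in ε..R, Real.sin ((2 * π * inner ℝ θ ξ) * r) / r := by
  have hn : 0 < n := j.pos
  rw [intervalIntegral.integral_of_le hR, ← integral_Ico_eq_integral_Ioc,
    ← integral_const_mul]
  rw [← integral_indicator measurableSet_Ioi, ← integral_indicator measurableSet_Ico]
  congr 1
  ext r
  by_cases hr : r ∈ Ico ε R
  · have hr0 : 0 < r := lt_of_lt_of_le hε hr.1
    rw [indicator_of_mem (show r ∈ Ioi (0 : ℝ) from hr0), indicator_of_mem hr]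
    have hnr : ‖r • θ‖ = r := by rw [norm_smul, hθ, Real.norm_eq_abs, abs_of_pos hr0, mul_one]
    have e1 : rzT j ε R (r • θ) = rzC n * (r * θ j / r ^ (n + 1)) := by
      unfold rzT
      rw [hnr, if_pos ⟨hr.1, hr.2⟩, rzK_eq, hnr]
      simp
    rw [e1, inner_smul_left]
    obtain ⟨m, rfl⟩ : ∃ m, n = m + 1 := ⟨n - 1, by omega⟩
    simp only [finrank_euclideanSpace, Fintype.card_fin, Nat.add_sub_cancel, conj_trivial]
    rw [show 2 * π * (r * inner ℝ θ ξ) = 2 * π * inner ℝ θ ξ * r by ring]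
    field_simp
    ring
  · rw [indicator_of_notMem hr]
    by_cases hr0 : r ∈ Ioi (0 : ℝ)
    · rw [indicator_of_mem hr0]
      have hnr : ‖r • θ‖ = r := by rw [norm_smul, hθ, Real.norm_eq_abs, abs_of_pos hr0, mul_one]
      have e1 : rzT j ε R (r • θ) = 0 := by
        unfold rzT
        rw [hnr]; exact if_neg hr
      rw [e1]; ring
    · rw [indicator_of_notMem hr0]

/-- bound of the Fourier transform of the kernel -/
noncomputable def rzA (n : ℕ) : ℝ :=
  rzC n * 3 * (volume : Measure (EuclideanSpace ℝ (Fin n))).toSphere.real univ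

lemma rzA_nonneg (n : ℕ) : 0 ≤ rzA n := by
  have := rzC_nonneg n
  unfold rzA
  positivity

lemma rzT_sin_bound (j : Fin n) (ε R : ℝ) (hε : 0 < ε) (hR : ε ≤ R) (ξ : EuclideanSpace ℝ (Fin n)) :
    |∫ x, rzT j ε R x * Real.sin (2 * π * inner ℝ x ξ)| ≤ rzA n := by
  have := rz_nontrivial j
  have hi : Integrable (fun x => rzT j ε R x * Real.sin (2 * π * inner ℝ x ξ)) := by
    refine (rzT_integrable j ε R hε).mul_bdd (c := 1) ?_ ?_
    · exact (by fun_prop : Continuous fun x => Real.sin (2 * π * inner ℝ x ξ)).aestronglyMeasurable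
    · exact ae_of_all _ fun x => Real.abs_sin_le_one _
  rw [rz_polar volume _ hi]
  have hb := norm_integral_le_of_norm_le_const (μ := (volume : Measure (EuclideanSpace ℝ (Fin n))).toSphere)
    (C := rzC n * 3) (f := fun θ : Metric.sphere (0 : EuclideanSpace ℝ (Fin n)) 1 =>
      ∫ r in Ioi (0 : ℝ), r ^ (Module.finrank ℝ (EuclideanSpace ℝ (Fin n)) - 1) *
      (rzT j ε R (r • (θ : EuclideanSpace ℝ (Fin n))) *
        Real.sin (2 * π * inner ℝ (r • (θ : EuclideanSpace ℝ (Fin n))) ξ)))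
    (ae_of_all _ fun θ => by
      have hθ : ‖(θ : EuclideanSpace ℝ (Fin n))‖ = 1 := by simp
      rw [rzT_radial j ε R hε hR θ ξ hθ, Real.norm_eq_abs, abs_mul, abs_mul,
        abs_of_nonneg (rzC_nonneg n)]
      have h1 : |(θ : EuclideanSpace ℝ (Fin n)) j| ≤ 1 := by
        exact (PiLp.norm_apply_le _ j).trans hθ.le
      have h2 := rz_sin (2 * π * inner ℝ (θ : EuclideanSpace ℝ (Fin n)) ξ) ε R hε hR
      have h0 := rzC_nonneg n
      calc _ ≤ rzC n * 1 * 3 := by gcongr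
        _ = _ := by ring)
  exact hb

lemma rzT_fourier (j : Fin n) (ε R : ℝ) (hε : 0 < ε) (hR : ε ≤ R) (ξ : EuclideanSpace ℝ (Fin n)) :
    ‖𝓕 (fun x => (rzT j ε R x : ℂ)) ξ‖ ≤ rzA n := by
  rw [Real.fourier_eq]
  set I := ∫ v, 𝐞 (-inner ℝ v ξ) • (rzT j ε R v : ℂ) with hI
  have hint : ∀ ξ : EuclideanSpace ℝ (Fin n), Integrable (fun v => 𝐞 (-inner ℝ v ξ) • (rzT j ε R v : ℂ)) :=
    fun ξ => (Real.fourierIntegral_convergent_iff ξ).2 (rzT_integrable j ε R hε).ofReal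
  have e1 : I = - ∫ v, 𝐞 (-inner ℝ v (-ξ)) • (rzT j ε R v : ℂ) := by
    rw [hI, ← integral_neg_eq_self, ← integral_neg]
    congr 1
    ext v
    rw [rzT_neg]
    simp
  have e2 : 2 * I = ∫ v, ((-2 * Complex.I) * ((rzT j ε R v * Real.sin (2 * π * inner ℝ v ξ) : ℝ) : ℂ)) := by
    have : 2 * I = I + I := by ring
    rw [this]
    nth_rw 2 [e1]
    rw [hI, ← sub_eq_add_neg, ← integral_sub (hint ξ) (hint (-ξ))]
    congr 1
    ext v
    simp only [Circle.smul_def, Real.fourierChar_apply, smul_eq_mul, inner_neg_right, neg_neg]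
    rw [← sub_mul]
    push_cast
    rw [Complex.sin]
    have hI2 : Complex.I * Complex.I = -1 := Complex.I_mul_I
    rw [show (2 * (π : ℂ) * -((inner ℝ v ξ : ℝ) : ℂ)) * Complex.I = -(2 * π * ((inner ℝ v ξ : ℝ) : ℂ)) * Complex.I by ring]
    linear_combination (Complex.exp (-(2 * ↑π * ↑(inner ℝ v ξ)) * Complex.I) - Complex.exp (2 * ↑π * ↑(inner ℝ v ξ) * Complex.I)) * (rzT j ε R v : ℂ) * hI2
  rw [integral_const_mul, integral_complex_ofReal] at e2
  have e3 := congrArg norm e2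
  rw [norm_mul, norm_mul] at e3
  simp only [norm_mul, Complex.norm_I, norm_neg, Complex.norm_real, Real.norm_eq_abs] at e3
  have := rzT_sin_bound j ε R hε hR ξ
  norm_num at e3
  linarith

end Kernel

section Far
variable {n : ℕ}

/-- Lipschitz constant of the kernel -/
noncomputable def rzD (n : ℕ) : ℝ := rzC n * ((n + 2) * 4 ^ (n + 1))

lemma rzD_nonneg (n : ℕ) : 0 ≤ rzD n := by
  have := rzC_nonneg n
  unfold rzD
  positivity

lemma rzK_diff (j : Fin n) (x u : EuclideanSpace ℝ (Fin n)) (hu : u ≠ 0) (h : ‖x - u‖ ≤ ‖u‖ / 2) :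
    |rieszK n j x - rieszK n j u| ≤ rzD n * ‖x - u‖ / ‖u‖ ^ (n + 1) := by
  have hb : 0 < ‖u‖ := norm_pos_iff.2 hu
  have hd0 : 0 ≤ ‖x - u‖ := norm_nonneg _
  have hab : |‖x‖ - ‖u‖| ≤ ‖x - u‖ := abs_norm_sub_norm_le x u
  have hxu : |x j - u j| ≤ ‖x - u‖ := PiLp.norm_apply_le (x - u) j
  have huj : |u j| ≤ ‖u‖ := PiLp.norm_apply_le u j
  rw [rzK_eq, rzK_eq, ← mul_sub, abs_mul, abs_of_nonneg (rzC_nonneg n)]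
  unfold rzD
  rw [mul_assoc, mul_div_assoc]
  refine mul_le_mul_of_nonneg_left ?_ (rzC_nonneg n)
  generalize ‖x - u‖ = d at *
  generalize ‖x‖ = a at *
  generalize ‖u‖ = b at *
  generalize x j = p at *
  generalize u j = q at *
  have hab' := abs_le.1 hab
  have ha : b / 2 ≤ a := by linarith
  have ha0 : 0 < a := by linarith
  have ha2 : a ≤ 2 * b := by linarith
  have e : p / a ^ (n + 1) - q / b ^ (n + 1) =
      (p - q) / a ^ (n + 1) + q * (b ^ (n + 1) - a ^ (n + 1)) / (a ^ (n + 1) * b ^ (n + 1)) := by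
    field_simp
    ring
  have hpow : 1 / a ^ (n + 1) ≤ 2 ^ (n + 1) / b ^ (n + 1) := by
    rw [← div_pow, one_div, ← inv_pow]
    gcongr
    rw [inv_le_comm₀ ha0 (by positivity), inv_div]
    exact ha
  have h1 : |(p - q) / a ^ (n + 1)| ≤ d * (2 ^ (n + 1) / b ^ (n + 1)) := by
    rw [abs_div, abs_of_pos (by positivity : 0 < a ^ (n + 1)), div_eq_mul_one_div]
    gcongr
  have h2 : |b ^ (n + 1) - a ^ (n + 1)| ≤ d * (n + 1) * (2 * b) ^ n := by
    have := abs_pow_sub_pow_le b a (n + 1)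
    rw [abs_of_pos hb, abs_of_pos ha0, Nat.add_sub_cancel] at this
    refine this.trans ?_
    push_cast
    have hm : max b a ≤ 2 * b := max_le (by linarith) ha2
    have hm0 : 0 ≤ max b a := le_max_of_le_left hb.le
    rw [abs_sub_comm] at hab
    gcongr
  have h3 : |q * (b ^ (n + 1) - a ^ (n + 1)) / (a ^ (n + 1) * b ^ (n + 1))| ≤
      b * (d * (n + 1) * (2 * b) ^ n) * ((2 ^ (n + 1) / b ^ (n + 1)) * (1 / b ^ (n + 1))) := by
    rw [abs_div, abs_mul, abs_of_pos (by positivity : 0 < a ^ (n + 1) * b ^ (n + 1)),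
      div_eq_mul_one_div, ← one_div_mul_one_div]
    gcongr
  rw [e]
  refine (abs_add_le _ _).trans ((add_le_add h1 h3).trans ?_)
  have e2 : b * (d * (n + 1) * (2 * b) ^ n) * ((2 ^ (n + 1) / b ^ (n + 1)) * (1 / b ^ (n + 1))) =
     (n + 1) * 2 ^ n * 2 ^ (n + 1) * (d / b ^ (n + 1)) := by
    rw [mul_pow]; field_simp; ring
  have e3 : d * (2 ^ (n + 1) / b ^ (n + 1)) = 2 ^ (n + 1) * (d / b ^ (n + 1)) := by ring
  have e4 : ((n + 2) * 4 ^ (n + 1)) * d / b ^ (n + 1) = ((n + 2) * 4 ^ (n + 1)) * (d / b ^ (n + 1)) := by ring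
  rw [e2, e3, ← add_mul]
  rw [← mul_div_assoc]
  have h24 : (4 : ℝ) ^ (n + 1) = 2 ^ (n + 1) * 2 ^ (n + 1) := by rw [← mul_pow]; norm_num
  have hq1 : (1 : ℝ) ≤ 2 ^ (n + 1) := one_le_pow₀ (by norm_num)
  have hq2 : (2 : ℝ) ^ (n + 1) = 2 * 2 ^ n := by ring
  have hq3 : (1 : ℝ) ≤ 2 ^ n := one_le_pow₀ (by norm_num)
  have : (2 : ℝ) ^ (n + 1) + (n + 1) * 2 ^ n * 2 ^ (n + 1) ≤ (n + 2) * 4 ^ (n + 1) := by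
    rw [h24, hq2]
    have hn : (0 : ℝ) ≤ n := Nat.cast_nonneg n
    have : (2:ℝ) ^ n ≤ 2 ^ n * 2 ^ n := by nlinarith
    nlinarith [mul_nonneg hn (by positivity : (0:ℝ) ≤ 2 ^ n * 2 ^ n)]
  gcongr

lemma rz_radial1 (j : Fin n) (R : ℝ) (hR : 0 < R) :
    Integrable (fun u : EuclideanSpace ℝ (Fin n) => if R ≤ ‖u‖ then 1 / ‖u‖ ^ (n + 1) else 0) ∧
    ∫ u : EuclideanSpace ℝ (Fin n), (if R ≤ ‖u‖ then 1 / ‖u‖ ^ (n + 1) else 0) =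
      n * volume.real (Metric.ball (0 : EuclideanSpace ℝ (Fin n)) 1) * (1 / R) := by
  have := rz_nontrivial j
  have hn : 0 < n := j.pos
  let g : ℝ → ℝ := fun r => if R ≤ r then 1 / r ^ (n + 1) else 0
  have hg : ((Ioi (0:ℝ)).indicator (fun y : ℝ => y ^ (Module.finrank ℝ (EuclideanSpace ℝ (Fin n)) - 1) • g y))
      = (Ici R).indicator (fun y : ℝ => y ^ (-2 : ℝ)) := by
    ext y
    by_cases hy : R ≤ y
    · have hy0 : 0 < y := lt_of_lt_of_le hR hy
      rw [indicator_of_mem (show y ∈ Ioi (0:ℝ) from hy0), indicator_of_mem (show y ∈ Ici R from hy)]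
      simp only [g, if_pos hy, finrank_euclideanSpace, Fintype.card_fin, smul_eq_mul]
      rw [Real.rpow_neg hy0.le, Real.rpow_two]
      obtain ⟨m, rfl⟩ : ∃ m, n = m + 1 := ⟨n - 1, by omega⟩
      simp only [Nat.add_sub_cancel]
      field_simp
      ring
    · rw [indicator_of_notMem (show y ∉ Ici R from hy)]
      simp [indicator, g, hy]
  have hI : IntegrableOn (fun y : ℝ => y ^ (-2 : ℝ)) (Ici R) := by
    rw [integrableOn_Ici_iff_integrableOn_Ioi]
    exact integrableOn_Ioi_rpow_of_lt (by norm_num) hR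
  constructor
  · have := (integrable_fun_norm_addHaar (volume : Measure (EuclideanSpace ℝ (Fin n))) (f := g)).2
    refine this ?_
    rw [← integrable_indicator_iff measurableSet_Ioi]
    rw [hg, integrable_indicator_iff measurableSet_Ici]
    exact hI
  · have := integral_fun_norm_addHaar (volume : Measure (EuclideanSpace ℝ (Fin n))) g
    refine this.trans ?_
    rw [← integral_indicator measurableSet_Ioi, hg, integral_indicator measurableSet_Ici,
      integral_Ici_eq_integral_Ioi, integral_Ioi_rpow_of_lt (by norm_num) hR]
    have : -R ^ (-2 + 1 : ℝ) / (-2 + 1) = 1 / R := by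
      rw [show (-2 + 1 : ℝ) = -1 by norm_num, Real.rpow_neg_one]; simp
    rw [this]
    simp [mul_assoc]

lemma rz_ball (x : EuclideanSpace ℝ (Fin n)) (r : ℝ) (hr : 0 < r) :
    volume.real (Metric.ball x r) = r ^ n * volume.real (Metric.ball (0 : EuclideanSpace ℝ (Fin n)) 1) := by
  rw [measureReal_def, Measure.addHaar_ball_of_pos volume x hr, ENNReal.toReal_mul,
    ENNReal.toReal_ofReal (by positivity), measureReal_def]
  simp

/-- constant of the far estimate -/
noncomputable def rzW (n : ℕ) : ℝ :=
  n * volume.real (Metric.ball (0 : EuclideanSpace ℝ (Fin n)) 1) * (rzD n + rzC n * 2 ^ (n + 1))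

lemma rzW_nonneg (n : ℕ) : 0 ≤ rzW n := by
  have := rzC_nonneg n
  have := rzD_nonneg n
  unfold rzW
  positivity

lemma rz_annulus (R d : ℝ) (hd : 0 ≤ d) (hR : 0 < R) (hdR : d ≤ R / 2) :
    volume.real (Metric.ball (0 : EuclideanSpace ℝ (Fin n)) (R + d) \ Metric.ball 0 (R - d)) ≤
      n * volume.real (Metric.ball (0 : EuclideanSpace ℝ (Fin n)) 1) * (2 * d * (2 * R) ^ (n - 1)) := by
  rw [measureReal_sdiff (Metric.ball_subset_ball (by linarith)) measurableSet_ball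
    measure_ball_lt_top.ne, rz_ball _ (R + d) (by linarith), rz_ball _ (R - d) (by linarith), ← sub_mul]
  have h := (le_abs_self _).trans (abs_pow_sub_pow_le (R + d) (R - d) n)
  have h2 : |R + d - (R - d)| = 2 * d := by rw [abs_of_nonneg] <;> linarith
  rw [h2, abs_of_pos (by linarith : 0 < R + d), abs_of_pos (by linarith : 0 < R - d),
    max_eq_left (by linarith)] at h
  calc _ ≤ (2 * d * n * (2 * R) ^ (n - 1)) * volume.real (Metric.ball (0 : EuclideanSpace ℝ (Fin n)) 1) := by
        refine mul_le_mul_of_nonneg_right (h.trans ?_) measureReal_nonneg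
        gcongr
        linarith
    _ = _ := by ring

lemma rzF_far_pt (j : Fin n) (R : ℝ) (hR : 0 < R) (v u : EuclideanSpace ℝ (Fin n))
    (h : ‖v - u‖ ≤ R / 2) :
    |rzF j R v - rzF j R u| ≤ rzD n * ‖v - u‖ * (if R ≤ ‖u‖ then 1 / ‖u‖ ^ (n + 1) else 0) +
      rzC n / R ^ n * (Metric.ball (0 : EuclideanSpace ℝ (Fin n)) (R + ‖v - u‖) \
        Metric.ball 0 (R - ‖v - u‖)).indicator (fun _ => 1) u := by
  have hC := rzC_nonneg n
  have hD := rzD_nonneg n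
  have hab := abs_le.1 (abs_norm_sub_norm_le v u)
  have hd0 := norm_nonneg (v - u)
  have hind : 0 ≤ (Metric.ball (0 : EuclideanSpace ℝ (Fin n)) (R + ‖v - u‖) \
        Metric.ball 0 (R - ‖v - u‖)).indicator (fun _ => (1:ℝ)) u :=
    indicator_nonneg (fun _ _ => zero_le_one) _
  by_cases hu : R ≤ ‖u‖
  · by_cases hv : R ≤ ‖v‖
    · rw [if_pos hu]
      unfold rzF
      rw [if_pos hu, if_pos hv]
      have := rzK_diff j v u (norm_pos_iff.1 (by linarith)) (by linarith)
      refine this.trans ?_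
      rw [mul_one_div]
      have : 0 ≤ rzC n / R ^ n := by positivity
      nlinarith [mul_nonneg this hind]
    · have hm : u ∈ (Metric.ball (0 : EuclideanSpace ℝ (Fin n)) (R + ‖v - u‖) \
        Metric.ball 0 (R - ‖v - u‖)) := by
        simp only [Set.mem_sdiff, mem_ball_zero_iff, not_lt]
        constructor <;> linarith
      rw [indicator_of_mem hm, mul_one, if_pos hu]
      have h1 : rzF j R v = 0 := if_neg hv
      rw [h1, zero_sub, abs_neg]
      have := rzF_abs_le j R hR u
      have : 0 ≤ rzD n * ‖v - u‖ * (1 / ‖u‖ ^ (n + 1)) := by positivity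
      linarith
  · have h1 : rzF j R u = 0 := if_neg hu
    rw [h1, sub_zero, if_neg hu, mul_zero, zero_add]
    by_cases hv : R ≤ ‖v‖
    · have hm : u ∈ (Metric.ball (0 : EuclideanSpace ℝ (Fin n)) (R + ‖v - u‖) \
        Metric.ball 0 (R - ‖v - u‖)) := by
        simp only [Set.mem_sdiff, mem_ball_zero_iff, not_lt]
        constructor <;> linarith
      rw [indicator_of_mem hm, mul_one]
      exact rzF_abs_le j R hR v
    · have h1 : rzF j R v = 0 := if_neg hv
      rw [h1, abs_zero]
      positivity

lemma rzF_far (j : Fin n) (R : ℝ) (hR : 0 < R) (x x0 : EuclideanSpace ℝ (Fin n))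
    (h : ‖x - x0‖ ≤ R / 2) :
    Integrable (fun y => rzF j R (x - y) - rzF j R (x0 - y)) ∧
    ∫ y, |rzF j R (x - y) - rzF j R (x0 - y)| ≤ rzW n * (‖x - x0‖ / R) := by
  have hC := rzC_nonneg n
  have hn : 0 < n := j.pos
  set d := ‖x - x0‖ with hd
  have hd0 : 0 ≤ d := norm_nonneg _
  let S : Set (EuclideanSpace ℝ (Fin n)) := Metric.ball 0 (R + d) \ Metric.ball 0 (R - d)
  have hS : MeasurableSet S := measurableSet_ball.diff measurableSet_ball
  have hSf : volume S ≠ ⊤ := (measure_mono sdiff_subset).trans_lt measure_ball_lt_top |>.ne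
  let G : EuclideanSpace ℝ (Fin n) → ℝ := fun u =>
    rzD n * d * (if R ≤ ‖u‖ then 1 / ‖u‖ ^ (n + 1) else 0) + rzC n / R ^ n * S.indicator (fun _ => 1) u
  obtain ⟨r1, r2⟩ := rz_radial1 j R hR
  have i2 : Integrable (S.indicator (fun _ => (1:ℝ))) := (integrable_indicator_iff hS).2 (integrableOn_const hSf)
  have hG : Integrable G := (r1.const_mul _).add (i2.const_mul _)
  have hGi : ∫ u, G u ≤ rzW n * (d / R) := by
    have := integral_add (r1.const_mul (rzD n * d)) (i2.const_mul (rzC n / R ^ n))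
    refine this.trans_le ?_
    rw [integral_const_mul, integral_const_mul, r2, integral_indicator hS, setIntegral_const, smul_eq_mul, mul_one]
    have ha := rz_annulus (n := n) R d hd0 hR h
    calc _ ≤ rzD n * d * (n * volume.real (Metric.ball (0 : EuclideanSpace ℝ (Fin n)) 1) * (1 / R)) +
        rzC n / R ^ n * (n * volume.real (Metric.ball (0 : EuclideanSpace ℝ (Fin n)) 1) * (2 * d * (2 * R) ^ (n - 1))) := by
          gcongr
      _ ≤ _ := by
        unfold rzW
        obtain ⟨m, hm⟩ : ∃ m, n = m + 1 := ⟨n - 1, by omega⟩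
        have e : rzC n / R ^ n * (n * volume.real (Metric.ball (0 : EuclideanSpace ℝ (Fin n)) 1) * (2 * d * (2 * R) ^ (n - 1)))
          = n * volume.real (Metric.ball (0 : EuclideanSpace ℝ (Fin n)) 1) * (rzC n * 2 ^ n) * (d / R) := by
          have e' : (2 * d * (2 * R) ^ (n - 1)) = 2 ^ n * (R ^ n * (d / R)) := by
            rw [hm]; simp only [Nat.add_sub_cancel, mul_pow]; field_simp; ring
          rw [e']
          field_simp
        rw [e]
        have : n * volume.real (Metric.ball (0 : EuclideanSpace ℝ (Fin n)) 1) * (rzC n * 2 ^ n) * (d / R)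
          ≤ n * volume.real (Metric.ball (0 : EuclideanSpace ℝ (Fin n)) 1) * (rzC n * 2 ^ (n+1)) * (d / R) := by
          gcongr
          · norm_num
          · omega
        refine (add_le_add_right this _).trans_eq ?_
        ring
  have hpt : ∀ y, ‖rzF j R (x - y) - rzF j R (x0 - y)‖ ≤ G (x0 - y) := by
    intro y
    have e : (x - y) - (x0 - y) = x - x0 := by abel
    have := rzF_far_pt j R hR (x - y) (x0 - y) (by rw [e]; exact h)
    rw [e] at this
    exact this
  have hGs : Integrable (fun y => G (x0 - y)) := hG.comp_sub_left x0
  constructor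
  · refine hGs.mono' ?_ (ae_of_all _ hpt)
    exact (((rzF_measurable j R).comp (measurable_const.sub measurable_id)).sub
      ((rzF_measurable j R).comp (measurable_const.sub measurable_id))).aestronglyMeasurable
  · refine (integral_mono_of_nonneg (ae_of_all _ fun y => abs_nonneg _) hGs (ae_of_all _ hpt)).trans ?_
    refine le_trans (le_of_eq ?_) hGi
    exact integral_sub_left_eq_self G volume x0

end Far

section Main
variable {n : ℕ}

lemma rzF_int (j : Fin n) (ε r : ℝ) (hε : 0 < ε) (hr : 0 < r) (x x' : EuclideanSpace ℝ (Fin n)) :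
    Integrable (fun y => rzF j ε (x - y) - rzF j r (x' - y)) := by
  let R : ℝ := max ε (max r (2 * ‖x - x'‖))
  have h1 : ε ≤ R := le_max_left _ _
  have h2 : r ≤ R := (le_max_left _ _).trans (le_max_right _ _)
  have h3 : 2 * ‖x - x'‖ ≤ R := (le_max_right _ _).trans (le_max_right _ _)
  have hR : 0 < R := hε.trans_le h1
  have hf := (rzF_far j R hR x x' (by linarith)).1
  have i1 := (rzT_integrable j ε R hε).comp_sub_left x
  have i2 := (rzT_integrable j r R hr).comp_sub_left x'
  refine ((i1.add hf).sub i2).congr (ae_of_all _ fun y => ?_)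
  simp only [Pi.add_apply, Pi.sub_apply]
  rw [rzF_split j ε R h1 (x - y), rzF_split j r R h2 (x' - y)]
  ring

/-- regularized truncation -/
noncomputable def rzU (j : Fin n) (φ : EuclideanSpace ℝ (Fin n) → ℝ) (ε : ℝ)
    (x : EuclideanSpace ℝ (Fin n)) : ℝ :=
  ∫ y, (rzF j ε (x - y) - rzF j 1 (0 - y)) * φ y

lemma rz_mul_int (k φ : EuclideanSpace ℝ (Fin n) → ℝ) (B : ℝ) (hk : Integrable k)
    (hc : Continuous φ) (hb : ∀ x, |φ x| ≤ B) : Integrable (fun y => k y * φ y) :=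
  hk.mul_bdd hc.aestronglyMeasurable (ae_of_all _ hb)

lemma rz_trunc_eq (j : Fin n) (φ : EuclideanSpace ℝ (Fin n) → ℝ) (B : ℝ) (hc : Continuous φ)
    (hb : ∀ x, |φ x| ≤ B) (ε : ℝ) (hε : 0 < ε) (x : EuclideanSpace ℝ (Fin n)) :
    rieszTruncLinf j φ x ε = rzU j φ ε x + ∫ y in Metric.ball x ε, rzF j 1 (0 - y) * φ y := by
  have hm : MeasurableSet {y : EuclideanSpace ℝ (Fin n) | ε ≤ dist x y} :=
    measurableSet_le measurable_const (continuous_const.dist continuous_id).measurable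
  have i1 := rz_mul_int _ φ B (rzF_int j ε 1 hε one_pos x 0) hc hb
  have i2 : IntegrableOn (fun y => rzF j 1 (0 - y) * φ y) (Metric.ball x ε) := by
    refine Measure.integrableOn_of_bounded (M := rzC n / 1 ^ n * B) measure_ball_lt_top.ne ?_ ?_
    · exact (((rzF_measurable j 1).comp (measurable_const.sub measurable_id)).mul
        hc.measurable).aestronglyMeasurable
    · refine ae_of_all _ fun y => ?_
      rw [norm_mul]
      exact mul_le_mul (rzF_abs_le j 1 one_pos _) (hb y) (norm_nonneg _)
        (div_nonneg (rzC_nonneg n) (by positivity))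
  unfold rieszTruncLinf rzU
  rw [← integral_indicator hm, ← integral_indicator measurableSet_ball,
    ← integral_add i1 ((integrable_indicator_iff measurableSet_ball).2 i2)]
  congr 1
  ext y
  have e1 : rzF j 1 (0 - y) = if 1 ≤ ‖y‖ then rieszK n j (-y) else 0 := by
    unfold rzF; rw [zero_sub, norm_neg]
  have e2 : rzF j ε (x - y) = if ε ≤ dist x y then rieszK n j (x - y) else 0 := by
    unfold rzF; rw [dist_eq_norm]
  rw [e2, e1]
  by_cases h : ε ≤ dist x y
  · rw [indicator_of_mem (show y ∈ {y | ε ≤ dist x y} from h), indicator_of_notMem, if_pos h, add_zero]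
    rw [Metric.mem_ball, dist_comm]; exact not_lt.2 h
  · rw [indicator_of_notMem (show y ∉ {y | ε ≤ dist x y} from h), indicator_of_mem, if_neg h, e1]
    · ring
    · rw [Metric.mem_ball, dist_comm]; exact not_le.1 h

/-- the sequence of truncation levels -/
noncomputable def rzE (k : ℕ) : ℝ := 1 / ((k : ℝ) + 1)

lemma rzE_pos (k : ℕ) : 0 < rzE k := by unfold rzE; positivity

lemma rzE_tendsto : Tendsto rzE atTop (𝓝 0) := tendsto_one_div_add_atTop_nhds_zero_nat

lemma rzU_tendsto (j : Fin n) (φ g : EuclideanSpace ℝ (Fin n) → ℝ) (B : ℝ) (hc : Continuous φ)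
    (hb : ∀ x, |φ x| ≤ B) (hg : IsRieszTransformLinf j φ g) :
    ∀ᵐ x, Tendsto (fun k => rzU j φ (rzE k) x) atTop (𝓝 (g x)) := by
  have hn : 0 < n := j.pos
  filter_upwards [hg] with x hx
  have ht : Tendsto rzE atTop (𝓝[>] 0) :=
    tendsto_nhdsWithin_iff.2 ⟨rzE_tendsto, Eventually.of_forall rzE_pos⟩
  have h1 := hx.comp ht
  have h2 : Tendsto (fun k => ∫ y in Metric.ball x (rzE k), rzF j 1 (0 - y) * φ y) atTop (𝓝 0) := by
    have h3 : Tendsto (fun k => rzC n / 1 ^ n * B * (rzE k ^ n *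
        volume.real (Metric.ball (0 : EuclideanSpace ℝ (Fin n)) 1))) atTop (𝓝 0) := by
      have := ((rzE_tendsto.pow n).mul_const (volume.real (Metric.ball (0 : EuclideanSpace ℝ (Fin n)) 1))).const_mul
        (rzC n / 1 ^ n * B)
      rw [zero_pow hn.ne', zero_mul, mul_zero] at this
      exact this
    refine squeeze_zero_norm (fun k => ?_) h3
    rw [← rz_ball x (rzE k) (rzE_pos k)]
    refine norm_setIntegral_le_of_norm_le_const measure_ball_lt_top fun y _ => ?_
    rw [norm_mul]
    exact mul_le_mul (rzF_abs_le j 1 one_pos _) (hb y) (norm_nonneg _)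
        (div_nonneg (rzC_nonneg n) (by positivity))
  have h4 := h1.sub h2
  rw [sub_zero] at h4
  refine h4.congr fun k => ?_
  simp only [Function.comp]
  rw [rz_trunc_eq j φ B hc hb (rzE k) (rzE_pos k) x]
  ring

lemma rzU_meas (j : Fin n) (φ : EuclideanSpace ℝ (Fin n) → ℝ) (hc : Continuous φ) (ε : ℝ) :
    StronglyMeasurable (rzU j φ ε) := by
  unfold rzU
  have hm : Measurable (fun p : EuclideanSpace ℝ (Fin n) × EuclideanSpace ℝ (Fin n) =>
      (rzF j ε (p.1 - p.2) - rzF j 1 (0 - p.2)) * φ p.2) :=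
    (((rzF_measurable j ε).comp (measurable_fst.sub measurable_snd)).sub
      ((rzF_measurable j 1).comp (measurable_const.sub measurable_snd))).mul
      (hc.measurable.comp measurable_snd)
  exact hm.stronglyMeasurable.integral_prod_right

lemma rzT_conv_meas (j : Fin n) (ψ : EuclideanSpace ℝ (Fin n) → ℝ) (hc : Measurable ψ) (ε R : ℝ) :
    StronglyMeasurable (fun x => ∫ y, rzT j ε R (x - y) * ψ y) := by
  have hm : Measurable (fun p : EuclideanSpace ℝ (Fin n) × EuclideanSpace ℝ (Fin n) =>
      rzT j ε R (p.1 - p.2) * ψ p.2) :=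
    ((rzT_measurable j ε R).comp (measurable_fst.sub measurable_snd)).mul
      (hc.comp measurable_snd)
  exact hm.stronglyMeasurable.integral_prod_right

lemma rzT_mean (j : Fin n) (ε R : ℝ) (x : EuclideanSpace ℝ (Fin n)) :
    ∫ y, rzT j ε R (x - y) = 0 := by
  rw [integral_sub_left_eq_self (rzT j ε R) volume x]
  have h := integral_neg_eq_self (rzT j ε R) (volume : Measure (EuclideanSpace ℝ (Fin n)))
  simp only [rzT_neg, integral_neg] at h
  linarith

/-- localized function -/
noncomputable def rzP (φ : EuclideanSpace ℝ (Fin n) → ℝ) (c : EuclideanSpace ℝ (Fin n)) (R a : ℝ) :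
    EuclideanSpace ℝ (Fin n) → ℝ :=
  (Metric.ball c (2 * R)).indicator (fun y => φ y - a)

lemma rzU_split (j : Fin n) (φ : EuclideanSpace ℝ (Fin n) → ℝ) (B : ℝ) (hc : Continuous φ)
    (hb : ∀ x, |φ x| ≤ B) (ε R a : ℝ) (hε : 0 < ε) (hεR : ε ≤ R) (c x : EuclideanSpace ℝ (Fin n))
    (hx : ‖x - c‖ ≤ R / 2) :
    |rzU j φ ε x - ∫ y, (rzF j R (c - y) - rzF j 1 (0 - y)) * φ y| ≤
      |∫ y, rzT j ε R (x - y) * rzP φ c R a y| + B * (rzW n * (‖x - c‖ / R)) := by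
  have hR : 0 < R := hε.trans_le hεR
  obtain ⟨f1, f2⟩ := rzF_far j R hR x c hx
  have i0 := (rzT_integrable j ε R hε).comp_sub_left x
  have i1 := rz_mul_int _ φ B i0 hc hb
  have i2 := rz_mul_int _ φ B f1 hc hb
  have i3 := rz_mul_int _ φ B (rzF_int j R 1 hR one_pos c 0) hc hb
  have e1 : rzU j φ ε x = (∫ y, rzT j ε R (x - y) * φ y) +
      (∫ y, (rzF j R (x - y) - rzF j R (c - y)) * φ y) +
      ∫ y, (rzF j R (c - y) - rzF j 1 (0 - y)) * φ y := by
    rw [← integral_add i1 i2, ← integral_add (by exact i1.add i2) i3]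
    unfold rzU
    congr 1
    ext y
    rw [rzF_split j ε R hεR (x - y)]
    ring
  have e2 : ∫ y, rzT j ε R (x - y) * φ y = ∫ y, rzT j ε R (x - y) * rzP φ c R a y := by
    have : ∫ y, rzT j ε R (x - y) * φ y = ∫ y, (rzT j ε R (x - y) * φ y - rzT j ε R (x - y) * a) := by
      rw [integral_sub i1 (i0.mul_const a), integral_mul_const, rzT_mean, zero_mul, sub_zero]
    rw [this]
    congr 1
    ext y
    unfold rzP
    by_cases hy : y ∈ Metric.ball c (2 * R)
    · rw [indicator_of_mem hy]; ring
    · rw [indicator_of_notMem hy]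
      have : rzT j ε R (x - y) = 0 := by
        unfold rzT
        rw [if_neg]
        rintro ⟨_, h2⟩
        apply hy
        rw [mem_ball_iff_norm]
        have : y - c = (x - c) - (x - y) := by abel
        rw [this]
        refine (norm_sub_le _ _).trans_lt ?_
        linarith
      rw [this]; ring
  have h3 : |∫ y, (rzF j R (x - y) - rzF j R (c - y)) * φ y| ≤ B * (rzW n * (‖x - c‖ / R)) := by
    have hB : 0 ≤ B := (abs_nonneg _).trans (hb 0)
    calc _ ≤ ∫ y, |(rzF j R (x - y) - rzF j R (c - y)) * φ y| := abs_integral_le_integral_abs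
      _ ≤ ∫ y, B * |rzF j R (x - y) - rzF j R (c - y)| := by
        refine integral_mono i2.abs (f1.abs.const_mul B) fun y => ?_
        simp only
        rw [abs_mul, mul_comm B]
        exact mul_le_mul_of_nonneg_left (hb y) (abs_nonneg _)
      _ ≤ _ := by
        rw [integral_const_mul]
        exact mul_le_mul_of_nonneg_left f2 hB
  rw [e1, add_sub_cancel_right, e2]
  exact (abs_add_le _ _).trans (by linarith)

lemma rzP_meas (φ : EuclideanSpace ℝ (Fin n) → ℝ) (hc : Continuous φ)
    (c : EuclideanSpace ℝ (Fin n)) (R a : ℝ) : Measurable (rzP φ c R a) :=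
  (hc.measurable.sub_const a).indicator measurableSet_ball

lemma rzP_bound (φ : EuclideanSpace ℝ (Fin n) → ℝ)
    (c : EuclideanSpace ℝ (Fin n)) (R a τ : ℝ) (hτ : 0 ≤ τ)
    (h : ∀ y ∈ Metric.ball c (2 * R), |φ y - a| ≤ τ) (y : EuclideanSpace ℝ (Fin n)) :
    ‖rzP φ c R a y‖ ≤ ‖(Metric.ball c (2 * R)).indicator (fun _ => τ) y‖ := by
  unfold rzP
  by_cases hy : y ∈ Metric.ball c (2 * R)
  · rw [indicator_of_mem hy, indicator_of_mem hy, Real.norm_of_nonneg hτ]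
    exact h y hy
  · rw [indicator_of_notMem hy, indicator_of_notMem hy]

lemma rzT_l2 (j : Fin n) (φ : EuclideanSpace ℝ (Fin n) → ℝ) (hc : Continuous φ)
    (ε R a τ : ℝ) (hε : 0 < ε) (hεR : ε ≤ R) (hτ : 0 ≤ τ) (c : EuclideanSpace ℝ (Fin n))
    (h : ∀ y ∈ Metric.ball c (2 * R), |φ y - a| ≤ τ) :
    eLpNorm (fun x => ∫ y, rzT j ε R (x - y) * rzP φ c R a y) 2 volume ≤
      ENNReal.ofReal (rzA n) * (ENNReal.ofReal τ * volume (Metric.ball c (2 * R)) ^ (1 / 2 : ℝ)) := by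
  have hbd := rzP_bound φ c R a τ hτ h
  have hi : Integrable ((Metric.ball c (2 * R)).indicator (fun _ => τ)) :=
    (integrable_indicator_iff measurableSet_ball).2 (integrableOn_const measure_ball_lt_top.ne)
  have hP : Integrable (rzP φ c R a) :=
    hi.mono (rzP_meas φ hc c R a).aestronglyMeasurable (ae_of_all _ hbd)
  have hPc : Integrable (fun y => (rzP φ c R a y : ℂ)) := hP.ofReal
  have hP2 : MemLp (fun y => (rzP φ c R a y : ℂ)) 2 volume := by
    refine rz_memLp_two _ hPc τ fun y => ?_
    rw [Complex.norm_real]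
    refine (hbd y).trans ?_
    rw [Real.norm_of_nonneg (indicator_nonneg (fun _ _ => hτ) _)]
    exact indicator_le_self' (fun _ _ => hτ) _
  have key := rz_conv_l2 (fun x => (rzT j ε R x : ℂ)) (fun y => (rzP φ c R a y : ℂ))
    (rzT_integrable j ε R hε).ofReal hPc (rzC n / ε ^ n) (rzA n)
    (fun x => by rw [Complex.norm_real]; exact rzT_abs_le j ε R hε x) hP2
    (fun ξ => rzT_fourier j ε R hε hεR ξ)
  have e1 : eLpNorm (fun x => ∫ y, (rzT j ε R (x - y) : ℂ) * (rzP φ c R a y : ℂ)) 2 volume =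
      eLpNorm (fun x => ∫ y, rzT j ε R (x - y) * rzP φ c R a y) 2 volume := by
    refine eLpNorm_congr_norm_ae (ae_of_all _ fun x => ?_)
    have : ∫ y, (rzT j ε R (x - y) : ℂ) * (rzP φ c R a y : ℂ) =
      ((∫ y, rzT j ε R (x - y) * rzP φ c R a y : ℝ) : ℂ) := by
      rw [← integral_complex_ofReal]
      simp
    rw [this, Complex.norm_real]
  rw [e1] at key
  refine key.trans (mul_le_mul_right ?_ _)
  have e2 : eLpNorm (fun y => (rzP φ c R a y : ℂ)) 2 volume = eLpNorm (rzP φ c R a) 2 volume :=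
    eLpNorm_congr_norm_ae (ae_of_all _ fun x => Complex.norm_real _)
  rw [e2]
  refine (eLpNorm_mono hbd).trans ?_
  rw [eLpNorm_indicator_const measurableSet_ball (by norm_num) (by norm_num), Real.enorm_of_nonneg hτ]
  simp

end Main

section Final
variable {n : ℕ}

lemma rz_cube_eq (c : EuclideanSpace ℝ (Fin n)) (l : ℝ) :
    cube c l = WithLp.ofLp ⁻¹' (Set.univ.pi fun i => Set.Ioo (c i) (c i + l)) := by
  ext x
  simp [cube]

lemma rz_cube_meas (c : EuclideanSpace ℝ (Fin n)) (l : ℝ) : MeasurableSet (cube c l) := by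
  rw [rz_cube_eq]
  exact (PiLp.volume_preserving_ofLp (Fin n)).measurable
    (MeasurableSet.univ_pi fun i => measurableSet_Ioo)

lemma rz_cube_vol (c : EuclideanSpace ℝ (Fin n)) (l : ℝ) (hl : 0 < l) :
    volume (cube c l) = ENNReal.ofReal (l ^ n) := by
  rw [rz_cube_eq, (PiLp.volume_preserving_ofLp (Fin n)).measure_preimage
    (MeasurableSet.univ_pi fun i => measurableSet_Ioo).nullMeasurableSet, Real.volume_pi_Ioo]
  simp [ENNReal.ofReal_pow hl.le]

lemma rz_cube_norm (j : Fin n) (c : EuclideanSpace ℝ (Fin n)) (l : ℝ) (hl : 0 < l)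
    (x : EuclideanSpace ℝ (Fin n)) (hx : x ∈ cube c l) : ‖x - c‖ ≤ n * l := by
  have hn : (1 : ℝ) ≤ n := by exact_mod_cast j.pos
  rw [EuclideanSpace.norm_eq, Real.sqrt_le_left (by positivity)]
  calc ∑ i, ‖(x - c) i‖ ^ 2 ≤ ∑ i : Fin n, l ^ 2 := by
        refine Finset.sum_le_sum fun i _ => ?_
        have := hx i
        have e : (x - c) i = x i - c i := rfl
        rw [e, Real.norm_of_nonneg (by linarith [this.1])]
        have h1 := this.1
        have h2 := this.2
        have : x i - c i ≤ l := by linarith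
        have : 0 ≤ x i - c i := by linarith
        gcongr
    _ = n * l ^ 2 := by simp
    _ ≤ (n * l) ^ 2 := by
        rw [mul_pow]
        gcongr
        nlinarith

lemma rz_g_meas (j : Fin n) (φ g : EuclideanSpace ℝ (Fin n) → ℝ) (B : ℝ) (hc : Continuous φ)
    (hb : ∀ x, |φ x| ≤ B) (hg : IsRieszTransformLinf j φ g) :
    AEStronglyMeasurable g volume :=
  aestronglyMeasurable_of_tendsto_ae atTop
    (fun k => (rzU_meas j φ hc (rzE k)).aestronglyMeasurable) (rzU_tendsto j φ g B hc hb hg)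

/-- the main constant -/
noncomputable def rzBd (n : ℕ) (B M τ : ℝ) : ℝ :=
  rzA n * τ * Real.sqrt ((2 * M) ^ n * volume.real (Metric.ball (0 : EuclideanSpace ℝ (Fin n)) 1)) +
    B * (rzW n * (n / M))

lemma rz_T_cube (j : Fin n) (φ : EuclideanSpace ℝ (Fin n) → ℝ) (hc : Continuous φ)
    (ε M a τ l : ℝ) (hl : 0 < l) (hM : 0 < M) (hε : 0 < ε) (hεR : ε ≤ M * l) (hτ : 0 ≤ τ)
    (c : EuclideanSpace ℝ (Fin n))
    (h : ∀ y ∈ Metric.ball c (2 * (M * l)), |φ y - a| ≤ τ) :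
    ∫⁻ x in cube c l, ‖∫ y, rzT j ε (M * l) (x - y) * rzP φ c (M * l) a y‖ₑ ≤
      ENNReal.ofReal (rzA n * τ *
        Real.sqrt ((2 * M) ^ n * volume.real (Metric.ball (0 : EuclideanSpace ℝ (Fin n)) 1)) * l ^ n) := by
  have hA := rzA_nonneg n
  let v := volume.real (Metric.ball (0 : EuclideanSpace ℝ (Fin n)) 1)
  have hv : 0 ≤ v := measureReal_nonneg
  have hvol : volume (Metric.ball c (2 * (M * l))) = ENNReal.ofReal (((2 * M) ^ n * v) * l ^ n) := by
    have := rz_ball c (2 * (M * l)) (by positivity)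
    rw [measureReal_def] at this
    rw [← ENNReal.ofReal_toReal (measure_ball_lt_top (μ := volume) (x := c) (r := 2 * (M * l))).ne, this]
    congr 1
    rw [← mul_assoc, mul_pow]
    ring
  have hm := rzT_conv_meas j (rzP φ c (M * l) a) (rzP_meas φ hc c (M * l) a) ε (M * l)
  rw [← eLpNorm_one_eq_lintegral_enorm]
  have h1 := eLpNorm_le_eLpNorm_mul_rpow_measure_univ (μ := volume.restrict (cube c l))
    (p := 1) (q := 2) (by norm_num) (hm.aestronglyMeasurable (μ := volume.restrict (cube c l)))
  refine h1.trans ?_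
  have h2 := (eLpNorm_restrict_le (fun x => ∫ y, rzT j ε (M * l) (x - y) * rzP φ c (M * l) a y) 2 volume (cube c l)).trans
    (rzT_l2 j φ hc ε (M * l) a τ hε hεR hτ c h)
  refine (mul_le_mul_left h2 _).trans ?_
  rw [Measure.restrict_apply_univ, rz_cube_vol c l hl, hvol]
  have e : (1 / (1 : ℝ≥0∞).toReal - 1 / (2 : ℝ≥0∞).toReal : ℝ) = 1 / 2 := by norm_num
  rw [e, ENNReal.ofReal_rpow_of_nonneg (by positivity) (by norm_num),
    ENNReal.ofReal_rpow_of_nonneg (by positivity) (by norm_num),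
    ← ENNReal.ofReal_mul hτ, ← ENNReal.ofReal_mul hA, ← ENNReal.ofReal_mul (by positivity)]
  refine ENNReal.ofReal_le_ofReal (le_of_eq ?_)
  rw [← Real.sqrt_eq_rpow, ← Real.sqrt_eq_rpow, Real.sqrt_mul (by positivity)]
  have : Real.sqrt (l ^ n) * Real.sqrt (l ^ n) = l ^ n := Real.mul_self_sqrt (by positivity)
  calc _ = rzA n * τ * Real.sqrt ((2 * M) ^ n * v) * (Real.sqrt (l ^ n) * Real.sqrt (l ^ n)) := by ring
    _ = _ := by rw [this]

lemma rz_main (j : Fin n) (φ g : EuclideanSpace ℝ (Fin n) → ℝ) (B : ℝ) (hc : Continuous φ)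
    (hb : ∀ x, |φ x| ≤ B) (hg : IsRieszTransformLinf j φ g)
    (M a τ l : ℝ) (hl : 0 < l) (hM : 2 * (n : ℝ) ≤ M) (hτ : 0 ≤ τ)
    (c : EuclideanSpace ℝ (Fin n))
    (h : ∀ y ∈ Metric.ball c (2 * (M * l)), |φ y - a| ≤ τ) :
    ∃ C, ∫⁻ x in cube c l, ‖g x - C‖ₑ ≤ ENNReal.ofReal (rzBd n B M τ * l ^ n) := by
  have hn : (1 : ℝ) ≤ n := by exact_mod_cast j.pos
  have hM0 : 0 < M := by linarith
  have hB : 0 ≤ B := (abs_nonneg _).trans (hb 0)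
  have hA := rzA_nonneg n
  have hW := rzW_nonneg n
  have hR : 0 < M * l := by positivity
  let C := ∫ y, (rzF j (M * l) (c - y) - rzF j 1 (0 - y)) * φ y
  refine ⟨C, ?_⟩
  have hlim := ae_restrict_of_ae (s := cube c l) (rzU_tendsto j φ g B hc hb hg)
  have hF : ∫⁻ x in cube c l, ‖g x - C‖ₑ ≤
      liminf (fun k => ∫⁻ x in cube c l, ‖rzU j φ (rzE k) x - C‖ₑ) atTop := by
    refine le_trans (le_of_eq ?_) (lintegral_liminf_le fun k => ?_)
    · refine lintegral_congr_ae ?_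
      filter_upwards [hlim] with x hx
      exact ((hx.sub_const C).enorm.liminf_eq).symm
    · exact ((rzU_meas j φ hc (rzE k)).measurable.sub_const C).enorm
  refine hF.trans ?_
  refine liminf_le_of_frequently_le' (Eventually.frequently ?_)
  have hev : ∀ᶠ k in atTop, rzE k ≤ M * l := by
    filter_upwards [rzE_tendsto.eventually (gt_mem_nhds hR)] with k hk using le_of_lt hk
  filter_upwards [hev] with k hk
  have hβ : 0 ≤ B * (rzW n * (n / M)) := by positivity
  calc ∫⁻ x in cube c l, ‖rzU j φ (rzE k) x - C‖ₑ
      ≤ ∫⁻ x in cube c l, (‖∫ y, rzT j (rzE k) (M * l) (x - y) * rzP φ c (M * l) a y‖ₑ +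
          ENNReal.ofReal (B * (rzW n * (n / M)))) := by
        refine setLIntegral_mono' (rz_cube_meas c l) fun x hx => ?_
        have hxn := rz_cube_norm j c l hl x hx
        have h1 := rzU_split j φ B hc hb (rzE k) (M * l) a (rzE_pos k) hk c x (by nlinarith)
        have h2 : ‖x - c‖ / (M * l) ≤ n / M := by
          rw [div_le_div_iff₀ hR hM0]
          nlinarith
        have h3 : B * (rzW n * (‖x - c‖ / (M * l))) ≤ B * (rzW n * (n / M)) := by gcongr
        rw [Real.enorm_eq_ofReal_abs, Real.enorm_eq_ofReal_abs, ← ENNReal.ofReal_add (abs_nonneg _) hβ]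
        exact ENNReal.ofReal_le_ofReal (by linarith)
    _ = (∫⁻ x in cube c l, ‖∫ y, rzT j (rzE k) (M * l) (x - y) * rzP φ c (M * l) a y‖ₑ) +
          ENNReal.ofReal (B * (rzW n * (n / M))) * ENNReal.ofReal (l ^ n) := by
        rw [lintegral_add_right _ measurable_const, setLIntegral_const, rz_cube_vol c l hl]
    _ ≤ _ := by
        refine (add_le_add_left (rz_T_cube j φ hc (rzE k) M a τ l hl hM0 (rzE_pos k) hk hτ c h) _).trans ?_
        rw [← ENNReal.ofReal_mul hβ, ← ENNReal.ofReal_add (by positivity) (by positivity)]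
        refine ENNReal.ofReal_le_ofReal (le_of_eq ?_)
        unfold rzBd
        ring

lemma rz_osc (j : Fin n) (φ g : EuclideanSpace ℝ (Fin n) → ℝ) (B : ℝ) (hc : Continuous φ)
    (hb : ∀ x, |φ x| ≤ B) (hg : IsRieszTransformLinf j φ g)
    (M a τ l : ℝ) (hl : 0 < l) (hM : 2 * (n : ℝ) ≤ M) (hτ : 0 ≤ τ)
    (c : EuclideanSpace ℝ (Fin n))
    (h : ∀ y ∈ Metric.ball c (2 * (M * l)), |φ y - a| ≤ τ) :
    IntegrableOn g (cube c l) ∧ cubeOsc g c l ≤ 2 * rzBd n B M τ := by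
  obtain ⟨C, hC⟩ := rz_main j φ g B hc hb hg M a τ l hl hM hτ c h
  have hn : (1 : ℝ) ≤ n := by exact_mod_cast j.pos
  have hM0 : 0 < M := by linarith
  have hB : 0 ≤ B := (abs_nonneg _).trans (hb 0)
  have hBd : 0 ≤ rzBd n B M τ := by
    have hA := rzA_nonneg n
    have hW := rzW_nonneg n
    unfold rzBd
    positivity
  have hln : 0 < l ^ n := by positivity
  have hvf : volume (cube c l) ≠ ⊤ := by rw [rz_cube_vol c l hl]; exact ENNReal.ofReal_ne_top
  have hvr : volume.real (cube c l) = l ^ n := by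
    rw [measureReal_def, rz_cube_vol c l hl, ENNReal.toReal_ofReal hln.le]
  have hgm := (rz_g_meas j φ g B hc hb hg).restrict (s := cube c l)
  have i1 : IntegrableOn (fun x => g x - C) (cube c l) :=
    ⟨hgm.sub aestronglyMeasurable_const, lt_of_le_of_lt hC ENNReal.ofReal_lt_top⟩
  have ic : ∀ K : ℝ, IntegrableOn (fun _ => K) (cube c l) := fun K => integrableOn_const hvf
  have ig : IntegrableOn g (cube c l) := by
    have := i1.add (ic C)
    refine this.congr (ae_of_all _ fun x => ?_)
    simp
  refine ⟨ig, ?_⟩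
  have hI : ∫ x in cube c l, |g x - C| ≤ rzBd n B M τ * l ^ n := by
    have : ∫ x in cube c l, |g x - C| = (∫⁻ x in cube c l, ‖g x - C‖ₑ).toReal :=
      integral_norm_eq_lintegral_enorm i1.aestronglyMeasurable
    rw [this]
    exact ENNReal.toReal_le_of_le_ofReal (by positivity) hC
  have hav : |C - cubeAvg g c l| * l ^ n ≤ ∫ x in cube c l, |g x - C| := by
    have e : ∫ x in cube c l, (g x - C) = (cubeAvg g c l - C) * l ^ n := by
      rw [integral_sub ig (ic C), setIntegral_const, hvr, smul_eq_mul]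
      unfold cubeAvg
      field_simp
    have h1 : |∫ x in cube c l, (g x - C)| ≤ ∫ x in cube c l, |g x - C| := abs_integral_le_integral_abs
    rw [e, abs_mul, abs_of_pos hln, abs_sub_comm] at h1
    exact h1
  have h2 : ∫ x in cube c l, |g x - cubeAvg g c l| ≤
      (∫ x in cube c l, |g x - C|) + |C - cubeAvg g c l| * l ^ n := by
    have e : |C - cubeAvg g c l| * l ^ n = ∫ x in cube c l, |C - cubeAvg g c l| := by
      rw [setIntegral_const, hvr, smul_eq_mul, mul_comm]
    rw [e, ← integral_add i1.abs (ic _)]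
    refine integral_mono (ig.sub (ic _)).abs (i1.abs.add (ic _)) fun x => ?_
    exact abs_sub_le _ _ _
  unfold cubeOsc
  rw [div_le_iff₀ hln]
  linarith

lemma rz_local (j : Fin n) (g : EuclideanSpace ℝ (Fin n) → ℝ)
    (h : ∀ c l, 0 < l → IntegrableOn g (cube c l)) : LocallyIntegrable g := by
  intro x
  let c : EuclideanSpace ℝ (Fin n) := WithLp.toLp 2 (fun i => x i - 1)
  refine ⟨cube c 2, ?_, h c 2 (by norm_num)⟩
  refine mem_of_superset (Metric.ball_mem_nhds x one_pos) fun y hy i => ?_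
  rw [mem_ball_iff_norm] at hy
  have h1 : |y i - x i| ≤ ‖y - x‖ := PiLp.norm_apply_le (y - x) i
  have h2 := abs_lt.1 (h1.trans_lt hy)
  have e : c i = x i - 1 := rfl
  rw [e]
  constructor <;> linarith

end Final

/-- If `φ ∈ BUC(ℝⁿ)` then `R_j(φ) ∈ VMO(ℝⁿ)` for each `j`. -/
theorem riesz_buc_mem_vmo {n : ℕ} (j : Fin n) (φ g : EuclideanSpace ℝ (Fin n) → ℝ) (B : ℝ)
    (huc : UniformContinuous φ) (hb : ∀ x, |φ x| ≤ B)
    (hg : IsRieszTransformLinf j φ g) : IsVMO g := by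
  have hc := huc.continuous
  have hB : 0 ≤ B := (abs_nonneg _).trans (hb 0)
  have hn : (1 : ℝ) ≤ n := by exact_mod_cast j.pos
  have key := fun c l (hl : 0 < l) => rz_osc j φ g B hc hb hg (2 * n) 0 B l hl le_rfl hB c
    (fun y _ => by rw [sub_zero]; exact hb y)
  refine ⟨⟨rz_local j g fun c l hl => (key c l hl).1, 2 * rzBd n B (2 * n) B,
    fun c l hl => (key c l hl).2⟩, fun ε hε => ?_⟩
  have hW := rzW_nonneg n
  have hA := rzA_nonneg n
  obtain ⟨M, hM1, hM2⟩ : ∃ M : ℝ, 2 * (n : ℝ) ≤ M ∧ B * (rzW n * (n / M)) ≤ ε / 4 := by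
    refine ⟨2 * n + B * rzW n * n * 4 / ε, ?_, ?_⟩
    · have : 0 ≤ B * rzW n * n * 4 / ε := by positivity
      linarith
    · have h0 : 0 ≤ B * rzW n * n * 4 / ε := by positivity
      have e : B * (rzW n * (n / (2 * n + B * rzW n * n * 4 / ε))) =
        (B * rzW n * n) / (2 * n + B * rzW n * n * 4 / ε) := by ring
      rw [e, div_le_iff₀ (by linarith)]
      have e2 : ε / 4 * (2 * n + B * rzW n * n * 4 / ε) = ε / 4 * (2 * n) + B * rzW n * n := by
        field_simp
      rw [e2]
      have : 0 ≤ ε / 4 * (2 * n) := by positivity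
      linarith
  have hM0 : 0 < M := by linarith
  let s : ℝ := rzA n * Real.sqrt ((2 * M) ^ n * volume.real (Metric.ball (0 : EuclideanSpace ℝ (Fin n)) 1))
  have hs : 0 ≤ s := by positivity
  let τ : ℝ := ε / (4 * (s + 1))
  have hτ : 0 < τ := by positivity
  have hsτ : s * τ ≤ ε / 4 := by
    have : s * τ = ε / 4 * (s / (s + 1)) := by
      simp only [τ]; field_simp
    rw [this]
    have h1 : s / (s + 1) ≤ 1 := by rw [div_le_one (by linarith)]; linarith
    nlinarith
  obtain ⟨η, hη, hu⟩ := Metric.uniformContinuous_iff.1 huc τ hτ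
  refine ⟨η / (2 * M), by positivity, fun c l hl hle => ?_⟩
  rw [le_div_iff₀ (by positivity)] at hle
  refine (rz_osc j φ g B hc hb hg M (φ c) τ l hl hM1 hτ.le c fun y hy => ?_).2.trans ?_
  · have : dist y c < η := (Metric.mem_ball.1 hy).trans_le (by linarith)
    exact (hu this).le
  · have : rzBd n B M τ = s * τ + B * (rzW n * (n / M)) := by
      unfold rzBd; simp only [s]; ring
    rw [this]
    linarith
end

section
/- For φ ∈ BMO(ℝ^n) and its Poisson extension φ(x,t) = (P_t * φ)(x), there is a constant C(n) such that ∫_{ℝ^n} |φ(y) - φ(x,t)| P_t(x-y) dy ≤ C(n)‖φ‖_* for all x ∈ ℝ^n and t > 0. -/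
open MeasureTheory Real Set Filter

/-- Poisson kernel of the upper half-space `ℝⁿ × (0,∞)`:
`P_t(x) = c_n t / (t² + |x|²)^((n+1)/2)` with `c_n = Γ((n+1)/2)/π^((n+1)/2)`. -/
noncomputable def poissonHK (n : ℕ) (t : ℝ) (x : EuclideanSpace ℝ (Fin n)) : ℝ :=
  (Real.Gamma (((n : ℝ) + 1) / 2) / Real.pi ^ (((n : ℝ) + 1) / 2)) * t /
    (t ^ 2 + ‖x‖ ^ 2) ^ (((n : ℝ) + 1) / 2)

/-- Poisson extension `φ(x, t) = (P_t * φ)(x)`. -/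
noncomputable def poissonExt {n : ℕ} (φ : EuclideanSpace ℝ (Fin n) → ℝ)
    (x : EuclideanSpace ℝ (Fin n)) (t : ℝ) : ℝ :=
  ∫ y, poissonHK n t (x - y) * φ y

namespace PoissonOsc

variable {n : ℕ}

abbrev E (n : ℕ) := EuclideanSpace ℝ (Fin n)

/-- Cube centred at `x` with half side `r`: its corner. -/
noncomputable def cor (x : E n) (r : ℝ) : E n := WithLp.toLp 2 (fun i => x i - r)

/-- Cube centred at `x` with half side `r`. -/
def Q (x : E n) (r : ℝ) : Set (E n) := cube (cor x r) (2 * r)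

lemma mem_Q {x : E n} {r : ℝ} {y : E n} : y ∈ Q x r ↔ ∀ i, |y i - x i| < r := by
  simp only [Q, cube, cor, mem_ofPred_eq, mem_Ioo, abs_lt]
  refine forall_congr' fun i => ?_
  constructor
  · rintro ⟨h1, h2⟩; constructor <;> linarith
  · rintro ⟨h1, h2⟩; constructor <;> linarith

lemma cube_eq (c : E n) (l : ℝ) :
    cube c l = (WithLp.ofLp : E n → (Fin n → ℝ)) ⁻¹' (Set.pi univ fun i => Ioo (c i) (c i + l)) := by
  ext y; simp [cube]

lemma measurableSet_cube (c : E n) (l : ℝ) : MeasurableSet (cube c l) := by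
  rw [cube_eq]
  exact (PiLp.volume_preserving_ofLp (Fin n)).measurable
    (MeasurableSet.univ_pi fun i => measurableSet_Ioo)

lemma volume_cube (c : E n) {l : ℝ} (hl : 0 ≤ l) : volume (cube c l) = ENNReal.ofReal (l ^ n) := by
  rw [cube_eq, (PiLp.volume_preserving_ofLp (Fin n)).measure_preimage
    (MeasurableSet.univ_pi fun i => measurableSet_Ioo).nullMeasurableSet, Real.volume_pi_Ioo]
  simp [ENNReal.ofReal_pow hl]

lemma measurableSet_Q (x : E n) (r : ℝ) : MeasurableSet (Q x r) := measurableSet_cube _ _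

lemma volume_Q (x : E n) {r : ℝ} (hr : 0 ≤ r) :
    volume (Q x r) = ENNReal.ofReal ((2 * r) ^ n) := volume_cube _ (by positivity)

lemma Q_mono (x : E n) {r s : ℝ} (h : r ≤ s) : Q x r ⊆ Q x s := fun y hy =>
  mem_Q.2 fun i => (mem_Q.1 hy i).trans_le h

lemma Q_bdd (x : E n) {r : ℝ} : Bornology.IsBounded (Q x r) := by
  rw [Metric.isBounded_iff_subset_closedBall x]
  refine ⟨Real.sqrt (∑ i : Fin n, r ^ 2), fun y hy => ?_⟩
  rw [Metric.mem_closedBall, EuclideanSpace.dist_eq]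
  refine Real.sqrt_le_sqrt (Finset.sum_le_sum fun i _ => ?_)
  have := (mem_Q.1 hy i).le
  rw [Real.dist_eq]
  gcongr

lemma intOn {φ : E n → ℝ} (h : LocallyIntegrable φ) (x : E n) (r : ℝ) :
    IntegrableOn φ (Q x r) :=
  (h.integrableOn_isCompact (Q_bdd x).isCompact_closure).mono_set subset_closure

lemma intOn_sub {φ : E n → ℝ} (h : LocallyIntegrable φ) (x : E n) {r : ℝ} (hr : 0 ≤ r) (a : ℝ) :
    IntegrableOn (fun y => φ y - a) (Q x r) := by
  refine (intOn h x r).sub (integrableOn_const ?_)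
  rw [volume_Q x hr]; exact ENNReal.ofReal_ne_top

/-- average on `Q x r`. -/
noncomputable def av (φ : E n → ℝ) (x : E n) (r : ℝ) : ℝ := cubeAvg φ (cor x r) (2 * r)

lemma osc_le {φ : E n → ℝ} {A : ℝ} (hA : ∀ c l, 0 < l → cubeOsc φ c l ≤ A) (x : E n) {r : ℝ}
    (hr : 0 < r) : ∫ y in Q x r, |φ y - av φ x r| ≤ A * (2 * r) ^ n := by
  have := hA (cor x r) (2 * r) (by positivity)
  rw [cubeOsc, div_le_iff₀ (by positivity)] at this
  exact this

lemma setInt_const (x : E n) {r : ℝ} (hr : 0 < r) (a : ℝ) :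
    ∫ _ in Q x r, a = a * (2 * r) ^ n := by
  rw [setIntegral_const, measureReal_def, volume_Q x hr.le, ENNReal.toReal_ofReal (by positivity),
    smul_eq_mul, mul_comm]

lemma av_step {φ : E n → ℝ} {A : ℝ} (h : LocallyIntegrable φ)
    (hA : ∀ c l, 0 < l → cubeOsc φ c l ≤ A) (x : E n) {r : ℝ}
    (hr : 0 < r) : |av φ x r - av φ x (2 * r)| ≤ 2 ^ n * A := by
  have h1 : av φ x r * (2 * r) ^ n = ∫ y in Q x r, φ y := by
    rw [av, cubeAvg, div_mul_cancel₀ _ (by positivity)]; rfl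
  have h2 : (av φ x r - av φ x (2 * r)) * (2 * r) ^ n =
      ∫ y in Q x r, (φ y - av φ x (2 * r)) := by
    rw [integral_sub (intOn h x r), setInt_const x hr, sub_mul, h1]
    refine integrableOn_const ?_
    rw [volume_Q x hr.le]; exact ENNReal.ofReal_ne_top
  have h3 : |av φ x r - av φ x (2 * r)| * (2 * r) ^ n ≤ A * (2 * (2 * r)) ^ n := by
    calc |av φ x r - av φ x (2 * r)| * (2 * r) ^ n
        = |∫ y in Q x r, (φ y - av φ x (2 * r))| := by
          rw [← h2, abs_mul, abs_of_pos (a := (2 * r) ^ n) (by positivity)]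
      _ ≤ ∫ y in Q x r, |φ y - av φ x (2 * r)| := abs_integral_le_integral_abs
      _ ≤ ∫ y in Q x (2 * r), |φ y - av φ x (2 * r)| := by
          refine setIntegral_mono_set (intOn_sub h x (by positivity) _).abs
            (ae_of_all _ fun y => abs_nonneg _) (Q_mono x (by linarith)).eventuallyLE
      _ ≤ _ := osc_le hA x (by positivity)
  have h4 : (2 * (2 * r)) ^ n = 2 ^ n * (2 * r) ^ n := mul_pow _ _ _
  rw [h4, ← mul_assoc] at h3
  have := le_of_mul_le_mul_right h3 (by positivity)
  linarith

lemma av_far {φ : E n → ℝ} {A : ℝ} (h : LocallyIntegrable φ)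
    (hA : ∀ c l, 0 < l → cubeOsc φ c l ≤ A) (x : E n) {t : ℝ}
    (ht : 0 < t) (k : ℕ) : |av φ x (2 ^ k * t) - av φ x t| ≤ k * (2 ^ n * A) := by
  induction k with
  | zero => simp
  | succ k ih =>
    have := av_step h hA x (r := 2 ^ k * t) (by positivity)
    rw [abs_sub_comm] at this
    rw [pow_succ', mul_assoc]
    push_cast
    have := abs_sub_le (av φ x (2 * (2 ^ k * t))) (av φ x (2 ^ k * t)) (av φ x t)
    linarith

lemma int_k {φ : E n → ℝ} {A : ℝ} (h : LocallyIntegrable φ)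
    (hA : ∀ c l, 0 < l → cubeOsc φ c l ≤ A) (x : E n) {t : ℝ}
    (ht : 0 < t) (k : ℕ) : ∫ y in Q x (2 ^ k * t), |φ y - av φ x t| ≤
      (1 + k * 2 ^ n) * A * (2 * (2 ^ k * t)) ^ n := by
  have hr : 0 < 2 ^ k * t := by positivity
  calc ∫ y in Q x (2 ^ k * t), |φ y - av φ x t| ≤
      ∫ y in Q x (2 ^ k * t), (|φ y - av φ x (2 ^ k * t)| + k * (2 ^ n * A)) := by
        refine setIntegral_mono (intOn_sub h x hr.le _).abs ?_ fun y => ?_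
        · refine (intOn_sub h x hr.le _).abs.add (integrableOn_const ?_)
          rw [volume_Q x hr.le]; exact ENNReal.ofReal_ne_top
        · have := abs_sub_le (φ y) (av φ x (2 ^ k * t)) (av φ x t)
          have := av_far h hA x ht k
          dsimp only
          linarith
    _ = (∫ y in Q x (2 ^ k * t), |φ y - av φ x (2 ^ k * t)|)
          + k * (2 ^ n * A) * (2 * (2 ^ k * t)) ^ n := by
        rw [integral_add (intOn_sub h x hr.le _).abs, setInt_const x hr]
        refine integrableOn_const ?_
        rw [volume_Q x hr.le]; exact ENNReal.ofReal_ne_top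
    _ ≤ _ := by
        have := osc_le hA x hr
        linarith

/-- the normalising constant. -/
noncomputable def cn (n : ℕ) : ℝ := Real.Gamma (((n : ℝ) + 1) / 2) / Real.pi ^ (((n : ℝ) + 1) / 2)

lemma cn_pos (n : ℕ) : 0 < cn n :=
  div_pos (Real.Gamma_pos_of_pos (by positivity)) (by positivity)

lemma hk_nonneg {t : ℝ} (ht : 0 < t) (z : E n) : 0 ≤ poissonHK n t z := by
  have := cn_pos n
  unfold poissonHK
  change 0 ≤ cn n * t / _
  positivity

lemma hk_cont {t : ℝ} (ht : 0 < t) : Continuous (poissonHK n t) := by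
  unfold poissonHK
  have h : ∀ z : E n, 0 < t ^ 2 + ‖z‖ ^ 2 := fun z => by positivity
  refine Continuous.div (by fun_prop) ?_ fun z => (Real.rpow_pos_of_pos (h z) _).ne'
  exact Continuous.rpow_const (by fun_prop) fun z => Or.inl (h z).ne'

lemma hk_le {t r : ℝ} (ht : 0 < t) (hr : 0 < r) (z : E n) (h : r ^ 2 ≤ t ^ 2 + ‖z‖ ^ 2) :
    poissonHK n t z ≤ cn n * t / r ^ (n + 1) := by
  have := cn_pos n
  have h1 : r ^ (n + 1) = (r ^ 2) ^ (((n : ℝ) + 1) / 2) := by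
    rw [← Real.rpow_natCast r 2, ← Real.rpow_mul hr.le, ← Real.rpow_natCast]
    congr 1; push_cast; ring
  unfold poissonHK
  change cn n * t / _ ≤ _
  rw [h1]
  gcongr

/-- coefficient bounding the kernel on the `k`th cube. -/
noncomputable def B (n : ℕ) (t : ℝ) (k : ℕ) : ℝ := cn n * t * 2 ^ (n + 1) / (2 ^ k * t) ^ (n + 1)

lemma B_nonneg {t : ℝ} (ht : 0 < t) (k : ℕ) : 0 ≤ B n t k := by
  have := cn_pos n
  unfold B; positivity

lemma exists_k {t : ℝ} (ht : 0 < t) (x y : E n) :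
    ∃ k, y ∈ Q x (2 ^ k * t) ∧ poissonHK n t (x - y) ≤ B n t k := by
  classical
  have hex : ∃ k : ℕ, y ∈ Q x (2 ^ k * t) := by
    obtain ⟨k, hk⟩ := pow_unbounded_of_one_lt (‖y - x‖ / t) (one_lt_two)
    refine ⟨k, mem_Q.2 fun i => ?_⟩
    rw [div_lt_iff₀ ht] at hk
    exact (PiLp.norm_apply_le (y - x) i).trans_lt hk
  refine ⟨Nat.find hex, Nat.find_spec hex, ?_⟩
  have hcn := cn_pos n
  rcases hk : Nat.find hex with _ | k
  · refine (hk_le ht ht _ (by nlinarith [norm_nonneg (x - y)])).trans ?_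
    unfold B
    simp only [pow_zero, one_mul]
    have : (1 : ℝ) ≤ 2 ^ (n + 1) := one_le_pow₀ one_le_two
    refine div_le_div_of_nonneg_right ?_ (by positivity)
    nlinarith [mul_pos hcn ht]
  · have hn : y ∉ Q x (2 ^ k * t) := Nat.find_min hex (by omega)
    rw [mem_Q] at hn
    push Not at hn
    obtain ⟨i, hi⟩ := hn
    have h2 : 2 ^ k * t ≤ ‖x - y‖ := by
      rw [norm_sub_rev]
      exact hi.trans (PiLp.norm_apply_le (y - x) i)
    have hp : 0 < 2 ^ k * t := by positivity
    refine (hk_le ht hp _ (by nlinarith)).trans (le_of_eq ?_)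
    unfold B
    have : (2 : ℝ) ^ (k + 1) * t = 2 * (2 ^ k * t) := by ring
    rw [this, mul_pow 2 (2 ^ k * t)]
    field_simp

lemma lint_of_int {α : Type*} [MeasurableSpace α] {μ : Measure α} {f : α → ℝ} {v : ℝ}
    (hf : ∀ᵐ a ∂μ, 0 ≤ f a) (hv : 0 < v) (h : ∫ a, f a ∂μ = v) :
    ∫⁻ a, ENNReal.ofReal (f a) ∂μ = ENNReal.ofReal v := by
  rw [← h, ofReal_integral_eq_lintegral_ofReal _ hf]
  exact Integrable.of_integral_ne_zero (by rw [h]; exact hv.ne')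

lemma lint_gamma {s b : ℝ} (hs : 0 < s) (hb : 0 < b) :
    ∫⁻ u in Ioi (0 : ℝ), ENNReal.ofReal (u ^ (s - 1) * rexp (-(b * u))) =
      ENNReal.ofReal ((1 / b) ^ s * Real.Gamma s) := by
  refine lint_of_int ?_ (mul_pos (by positivity) (Real.Gamma_pos_of_pos hs))
    (Real.integral_rpow_mul_exp_neg_mul_Ioi hs hb)
  refine (ae_restrict_iff' measurableSet_Ioi).2 (ae_of_all _ fun u (hu : 0 < u) => ?_)
  positivity

lemma lint_gauss {u : ℝ} (hu : 0 < u) :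
    ∫⁻ z : E n, ENNReal.ofReal (rexp (-u * ‖z‖ ^ 2)) = ENNReal.ofReal ((π / u) ^ ((n : ℝ) / 2)) := by
  refine lint_of_int (ae_of_all _ fun z => by positivity) (by positivity) ?_
  rw [GaussianFourier.integral_rexp_neg_mul_sq_norm hu]
  simp

lemma lint_hk {t : ℝ} (ht : 0 < t) : ∫⁻ z : E n, ENNReal.ofReal (poissonHK n t z) = 1 := by
  set s : ℝ := ((n : ℝ) + 1) / 2 with hsdef
  have hs : 0 < s := by positivity
  have hG := Real.Gamma_pos_of_pos hs
  have e1 : ∀ z : E n, ENNReal.ofReal (poissonHK n t z) = ENNReal.ofReal (t / π ^ s) *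
      ∫⁻ u in Ioi (0 : ℝ), ENNReal.ofReal (u ^ (s - 1) * rexp (-((t ^ 2 + ‖z‖ ^ 2) * u))) := by
    intro z
    have hz : 0 < t ^ 2 + ‖z‖ ^ 2 := by positivity
    rw [lint_gamma hs hz, ← ENNReal.ofReal_mul (by positivity)]
    congr 1
    unfold poissonHK
    rw [← hsdef, Real.div_rpow zero_le_one hz.le, Real.one_rpow]
    field_simp
  simp_rw [e1]
  rw [lintegral_const_mul' _ _ ENNReal.ofReal_ne_top, lintegral_lintegral_swap]
  · have e2 : ∀ u ∈ Ioi (0 : ℝ),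
        ∫⁻ z : E n, ENNReal.ofReal (u ^ (s - 1) * rexp (-((t ^ 2 + ‖z‖ ^ 2) * u))) =
        ENNReal.ofReal (π ^ ((n : ℝ) / 2)) *
          ENNReal.ofReal (u ^ ((1 / 2 : ℝ) - 1) * rexp (-(t ^ 2 * u))) := by
      intro u hu
      have hu : 0 < u := hu
      have : ∀ z : E n, ENNReal.ofReal (u ^ (s - 1) * rexp (-((t ^ 2 + ‖z‖ ^ 2) * u))) =
          ENNReal.ofReal (u ^ (s - 1) * rexp (-(t ^ 2 * u))) *
            ENNReal.ofReal (rexp (-u * ‖z‖ ^ 2)) := by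
        intro z
        rw [← ENNReal.ofReal_mul (by positivity), mul_assoc, ← Real.exp_add]
        congr 3; ring
      simp_rw [this]
      rw [lintegral_const_mul' _ _ ENNReal.ofReal_ne_top, lint_gauss hu,
        ← ENNReal.ofReal_mul (by positivity), ← ENNReal.ofReal_mul (by positivity)]
      congr 1
      rw [Real.div_rpow pi_pos.le hu.le]
      have : u ^ (s - 1) = u ^ ((1 / 2 : ℝ) - 1) * u ^ ((n : ℝ) / 2) := by
        rw [← Real.rpow_add hu]; congr 1; rw [hsdef]; ring
      rw [this]
      field_simp
    rw [setLIntegral_congr_fun measurableSet_Ioi e2,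
      lintegral_const_mul' _ _ ENNReal.ofReal_ne_top, lint_gamma (by norm_num) (by positivity),
      ← ENNReal.ofReal_mul (by positivity), ← ENNReal.ofReal_mul (by positivity),
      ← ENNReal.ofReal_one]
    congr 1
    rw [Real.Gamma_one_half_eq, ← Real.sqrt_eq_rpow, Real.sqrt_eq_rpow π,
      Real.sqrt_div zero_le_one, Real.sqrt_one, Real.sqrt_sq ht.le]
    have : π ^ s = π ^ ((n : ℝ) / 2) * π ^ (1 / 2 : ℝ) := by
      rw [← Real.rpow_add pi_pos]; congr 1; rw [hsdef]; ring
    rw [this]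
    field_simp
  · refine Measurable.aemeasurable ?_
    unfold Function.uncurry
    fun_prop

/-- The numerical constant. -/
noncomputable def K (n : ℕ) : ℝ :=
  ∑' k : ℕ, cn n * 2 ^ (2 * n + 1) * ((1 + k * 2 ^ n) * (1 / 2 : ℝ) ^ k)

lemma K_summable (n : ℕ) :
    Summable fun k : ℕ => cn n * 2 ^ (2 * n + 1) * ((1 + k * 2 ^ n) * (1 / 2 : ℝ) ^ k) := by
  apply Summable.mul_left
  have h0 : Summable fun k : ℕ => (1 / 2 : ℝ) ^ k := summable_geometric_two
  have h1 := summable_pow_mul_geometric_of_norm_lt_one 1 (r := (1 / 2 : ℝ)) (by norm_num)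
  refine (h0.add (h1.mul_left (2 ^ n))).congr fun k => ?_
  simp only [pow_one]; ring

lemma main_lint {φ : E n → ℝ} {A : ℝ} (h : LocallyIntegrable φ)
    (hA : ∀ c l, 0 < l → cubeOsc φ c l ≤ A) (hA0 : 0 ≤ A) (x : E n) {t : ℝ} (ht : 0 < t) :
    ∫⁻ y, ENNReal.ofReal (|φ y - av φ x t| * poissonHK n t (x - y)) ≤ ENNReal.ofReal (K n * A) := by
  have hcn := cn_pos n
  have hm : AEStronglyMeasurable φ := h.aestronglyMeasurable
  calc ∫⁻ y, ENNReal.ofReal (|φ y - av φ x t| * poissonHK n t (x - y))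
      ≤ ∫⁻ y, ∑' k : ℕ, (Q x (2 ^ k * t)).indicator
          (fun y => ENNReal.ofReal (B n t k) * ENNReal.ofReal (|φ y - av φ x t|)) y := by
        refine lintegral_mono fun y => ?_
        obtain ⟨k, hk, hB⟩ := exists_k ht x y
        refine le_trans ?_ (ENNReal.le_tsum k)
        rw [indicator_of_mem hk, mul_comm, ENNReal.ofReal_mul (hk_nonneg ht _)]
        gcongr
    _ = ∑' k : ℕ, ∫⁻ y, (Q x (2 ^ k * t)).indicator
          (fun y => ENNReal.ofReal (B n t k) * ENNReal.ofReal (|φ y - av φ x t|)) y := by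
        refine lintegral_tsum fun k => AEMeasurable.indicator ?_ (measurableSet_Q _ _)
        have := hm.aemeasurable
        have : AEMeasurable (fun y => |φ y - av φ x t|) :=
          (this.sub_const _).abs
        exact this.ennreal_ofReal.const_mul _
    _ ≤ ∑' k : ℕ, ENNReal.ofReal
          (cn n * 2 ^ (2 * n + 1) * ((1 + k * 2 ^ n) * (1 / 2 : ℝ) ^ k) * A) := by
        refine ENNReal.tsum_le_tsum fun k => ?_
        rw [lintegral_indicator (measurableSet_Q _ _),
          lintegral_const_mul' _ _ ENNReal.ofReal_ne_top,
          ← ofReal_integral_eq_lintegral_ofReal (intOn_sub h x (by positivity) _).abs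
            (ae_of_all _ fun y => abs_nonneg _), ← ENNReal.ofReal_mul (B_nonneg ht k)]
        refine ENNReal.ofReal_le_ofReal ?_
        refine (mul_le_mul_of_nonneg_left (int_k h hA x ht k) (B_nonneg ht k)).trans (le_of_eq ?_)
        unfold B
        rw [mul_pow 2 (2 ^ k * t), pow_succ (2 ^ k * t), one_div, inv_pow]
        have : (2 : ℝ) ^ (2 * n + 1) = 2 ^ (n + 1) * 2 ^ n := by ring
        rw [this]
        field_simp
    _ = ENNReal.ofReal (K n * A) := by
        rw [← ENNReal.ofReal_tsum_of_nonneg _ ((K_summable n).mul_right A), tsum_mul_right, K]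
        intro k
        positivity

end PoissonOsc

/-- For `φ ∈ BMO(ℝⁿ)` and its Poisson extension `φ(x,t)`, there is a constant `C(n)` with
`∫ |φ(y) - φ(x,t)| P_t(x-y) dy ≤ C(n) ‖φ‖_*` for all `x` and `t > 0`. -/
theorem poisson_oscillation_bound (n : ℕ) :
    ∃ C > (0 : ℝ), ∀ (φ : EuclideanSpace ℝ (Fin n) → ℝ) (A : ℝ)
      (x : EuclideanSpace ℝ (Fin n)) (t : ℝ),
      LocallyIntegrable φ → (∀ c l, 0 < l → cubeOsc φ c l ≤ A) → 0 < t →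
      ∫⁻ y, ENNReal.ofReal (|φ y - poissonExt φ x t| * poissonHK n t (x - y)) ≤
        ENNReal.ofReal (C * A) := by
  have hK : 0 ≤ PoissonOsc.K n := tsum_nonneg fun k => by
    have := PoissonOsc.cn_pos n
    positivity
  refine ⟨2 * PoissonOsc.K n + 1, by positivity, fun φ A x t h hA ht => ?_⟩
  have hA0 : 0 ≤ A := by
    refine le_trans ?_ (hA 0 1 one_pos)
    unfold cubeOsc
    exact div_nonneg (integral_nonneg fun y => abs_nonneg _) (by positivity)
  have hmain := PoissonOsc.main_lint h hA hA0 x ht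
  set a := PoissonOsc.av φ x t with ha
  have hPc : Continuous fun y => poissonHK n t (x - y) :=
    (PoissonOsc.hk_cont ht).comp (by fun_prop)
  have hP0 : ∀ y, 0 ≤ poissonHK n t (x - y) := fun y => PoissonOsc.hk_nonneg ht _
  have hP1 : ∫⁻ y, ENNReal.ofReal (poissonHK n t (x - y)) = 1 := by
    rw [lintegral_sub_left_eq_self (fun y => ENNReal.ofReal (poissonHK n t y)) x]
    exact PoissonOsc.lint_hk ht
  have hPi : Integrable fun y => poissonHK n t (x - y) := by
    refine (lintegral_ofReal_ne_top_iff_integrable hPc.aestronglyMeasurable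
      (ae_of_all _ hP0)).1 ?_
    rw [hP1]; exact ENNReal.one_ne_top
  have hPI : ∫ y, poissonHK n t (x - y) = 1 := by
    rw [integral_eq_lintegral_of_nonneg_ae (ae_of_all _ hP0) hPc.aestronglyMeasurable, hP1]
    simp
  have hm : AEStronglyMeasurable φ := h.aestronglyMeasurable
  have hDm : AEStronglyMeasurable fun y => (φ y - a) * poissonHK n t (x - y) :=
    (hm.sub aestronglyMeasurable_const).mul hPc.aestronglyMeasurable
  have habs : ∀ y, |(φ y - a) * poissonHK n t (x - y)| = |φ y - a| * poissonHK n t (x - y) :=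
    fun y => by rw [abs_mul, abs_of_nonneg (hP0 y)]
  have hDi' : Integrable fun y => |φ y - a| * poissonHK n t (x - y) := by
    refine (lintegral_ofReal_ne_top_iff_integrable ?_
      (ae_of_all _ fun y => mul_nonneg (abs_nonneg _) (hP0 y))).1
      (hmain.trans_lt ENNReal.ofReal_lt_top).ne
    exact hDm.norm.congr (ae_of_all _ habs)
  have hDi : Integrable fun y => (φ y - a) * poissonHK n t (x - y) :=
    (integrable_norm_iff hDm).1 (hDi'.congr (ae_of_all _ fun y => (habs y).symm))
  have hext : poissonExt φ x t - a = ∫ y, (φ y - a) * poissonHK n t (x - y) := by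
    have : (fun y => poissonHK n t (x - y) * φ y) =
        fun y => (φ y - a) * poissonHK n t (x - y) + a * poissonHK n t (x - y) := by
      funext y; ring
    rw [poissonExt, this, integral_add hDi (hPi.const_mul a), integral_const_mul, hPI]
    ring
  have hKA : 0 ≤ PoissonOsc.K n * A := mul_nonneg hK hA0
  have hbd : |a - poissonExt φ x t| ≤ PoissonOsc.K n * A := by
    rw [abs_sub_comm, hext]
    refine abs_integral_le_integral_abs.trans ?_
    simp_rw [habs]
    rw [← ofReal_integral_eq_lintegral_ofReal hDi'
      (ae_of_all _ fun y => mul_nonneg (abs_nonneg _) (hP0 y))] at hmain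
    exact (ENNReal.ofReal_le_ofReal_iff hKA).1 hmain
  calc ∫⁻ y, ENNReal.ofReal (|φ y - poissonExt φ x t| * poissonHK n t (x - y))
      ≤ ∫⁻ y, (ENNReal.ofReal (|φ y - a| * poissonHK n t (x - y)) +
          ENNReal.ofReal (PoissonOsc.K n * A) * ENNReal.ofReal (poissonHK n t (x - y))) := by
        refine lintegral_mono fun y => ?_
        rw [← ENNReal.ofReal_mul hKA,
          ← ENNReal.ofReal_add (mul_nonneg (abs_nonneg _) (hP0 y)) (mul_nonneg hKA (hP0 y)),
          ← add_mul]
        refine ENNReal.ofReal_le_ofReal (mul_le_mul_of_nonneg_right ?_ (hP0 y))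
        exact (abs_sub_le _ a _).trans (by linarith)
    _ = (∫⁻ y, ENNReal.ofReal (|φ y - a| * poissonHK n t (x - y))) +
          ENNReal.ofReal (PoissonOsc.K n * A) := by
        rw [lintegral_add_right _ (hPc.measurable.ennreal_ofReal.const_mul _), lintegral_const_mul' _ _ ENNReal.ofReal_ne_top,
          hP1, mul_one]
    _ ≤ ENNReal.ofReal (PoissonOsc.K n * A) + ENNReal.ofReal (PoissonOsc.K n * A) := by gcongr
    _ ≤ ENNReal.ofReal ((2 * PoissonOsc.K n + 1) * A) := by
        rw [← ENNReal.ofReal_add hKA hKA]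
        refine ENNReal.ofReal_le_ofReal ?_
        linarith
end
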